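/- Let k >= k0 (for a sufficiently large absolute k0) and let r be a density with 2^k/k < r <= 2^k * ln 2. Then there is a constant c = c(k, r) > 0 such that with high probability the degree sequence d = d(Phi) of the uniform random formula Phi = Phi_k(n, floor(r*n)) has the property that E[|S(Phi_d)|^2] >= exp(c*n) * (E[|S(Phi_d)|])^2, where both expectations are over the uniform random d-compatible formula Phi_d. In other words, the second moment of the number of satisfying assignments exceeds the square of its first moment by an exponential factor even after conditioning on the degree sequence. -/

import Mathlib

open Classical Finset Filter

noncomputable section

/-- A literal: a variable index together with a sign (`true` = positive occurrence). -/
abbrev Lit (n : ℕ) := Fin n × Bool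

/-- A clause: an ordered `k`-tuple of literals. -/
abbrev Clause (n k : ℕ) := Fin k → Lit n

/-- A `k`-CNF formula with `m` clauses over `n` variables. -/
abbrev Formula (n k m : ℕ) := Fin m → Clause n k

/-- A truth assignment. -/
abbrev Assignment (n : ℕ) := Fin n → Bool

/-- The truth value of a literal under an assignment. -/
def litVal {n : ℕ} (σ : Assignment n) (l : Lit n) : Bool :=
  if l.2 then σ l.1 else !(σ l.1)

/-- `σ` satisfies `Φ` if every clause contains at least one true literal. -/
def Satisfies {n k m : ℕ} (σ : Assignment n) (Φ : Formula n k m) : Prop :=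
  ∀ i : Fin m, ∃ j : Fin k, litVal σ (Φ i j) = true

/-- The set of satisfying assignments of `Φ`. -/
def satSet (n k m : ℕ) (Φ : Formula n k m) : Finset (Assignment n) :=
  univ.filter fun σ => Satisfies σ Φ

/-- The number of satisfying assignments of `Φ`. -/
def satCount (n k m : ℕ) (Φ : Formula n k m) : ℕ := (satSet n k m Φ).card

/-- Probability of an event under the uniformly random formula `Φ_k(n,m)`. -/
def prF (n k m : ℕ) (E : Formula n k m → Prop) : ℝ :=
  ((univ.filter fun Φ : Formula n k m => E Φ).card : ℝ) / (Fintype.card (Formula n k m) : ℝ)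

/-- Expectation of a function of the uniformly random formula `Φ_k(n,m)`. -/
def expF (n k m : ℕ) (f : Formula n k m → ℝ) : ℝ :=
  (∑ Φ : Formula n k m, f Φ) / (Fintype.card (Formula n k m) : ℝ)

/-- The number of occurrences of the literal `l` in `Φ`. -/
def occ (n k m : ℕ) (Φ : Formula n k m) (l : Lit n) : ℕ :=
  (univ.filter fun p : Fin m × Fin k => Φ p.1 p.2 = l).card

/-- The (signed) degree sequence of `Φ`. -/
def degSeq (n k m : ℕ) (Φ : Formula n k m) : Lit n → ℕ := occ n k m Φ

/-- Hamming distance between two assignments. -/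
def hdist {n : ℕ} (σ τ : Assignment n) : ℕ :=
  (univ.filter fun x => σ x ≠ τ x).card

/-- The majority-vote assignment: `x ↦ true` iff `x` occurs more often positively
than negatively. -/
def sigmaMaj (n k m : ℕ) (Φ : Formula n k m) : Assignment n :=
  fun x => decide (occ n k m Φ (x, false) < occ n k m Φ (x, true))

/-- The set of formulas with a given degree sequence `d`. -/
def degClass (n k m : ℕ) (d : Lit n → ℕ) : Finset (Formula n k m) :=
  univ.filter fun Φ => degSeq n k m Φ = d

/-- Conditional expectation given the degree sequence `d`
(i.e. expectation over the uniformly random `d`-compatible formula). -/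
def condE (n k m : ℕ) (d : Lit n → ℕ) (f : Formula n k m → ℝ) : ℝ :=
  (∑ Φ ∈ degClass n k m d, f Φ) / ((degClass n k m d).card : ℝ)

/-!
Rearranging the literals of `Φ` along a uniformly random permutation of its slots samples a formula
uniformly from the formulas with the degree sequence of `Φ`. On this space consider the sum, over
all pairs of slots in a common clause, of the products of the relative biases of the two literals.

Under a transposition this statistic changes by `O(k)`, so it is subgaussian with variance proxy
`O(n)`. Weighting a formula by its number of satisfying assignments, however, shifts its mean down
by order `n`. Indeed, the slots holding true literals form a set that hits every clause, and such a
set has linearly more pairs of a slot inside and a slot outside within a clause than a typical set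
of its size; moreover the satisfied occurrences lean towards the majority sign of their variables,
so slots inside have larger relative bias than slots outside. A weight that moves the mean of a
subgaussian statistic that far must have a second moment exponentially larger than the square of its
first moment, by Cauchy-Schwarz applied to the weight and an exponential tilt of the statistic.
-/

open scoped BigOperators

/-! ### Concentration on the symmetric group -/

section PermutationConcentration

theorem expect_exp_mul_le_of_mem_Icc {ι : Type*} [Fintype ι] [Nonempty ι] {y : ι → ℝ} {a b : ℝ}
    (hy : ∀ i, y i ∈ Set.Icc a b) (hmean : 𝔼 i, y i = 0) (t : ℝ) :
    𝔼 i, Real.exp (t * y i) ≤ Real.exp (t ^ 2 * (b - a) ^ 2 / 8) := by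
  let _ : MeasurableSpace ι := ⊤
  have integral_eq (f : ι → ℝ) : ∫ i, f i ∂(PMF.uniformOfFintype ι).toMeasure = 𝔼 i, f i := by
    simp [PMF.integral_eq_sum, Fintype.expect_eq_sum_div_card, div_eq_inv_mul, mul_sum]
  have hsub := (ProbabilityTheory.hasSubgaussianMGF_of_mem_Icc_of_integral_eq_zero
    (μ := (PMF.uniformOfFintype ι).toMeasure) (measurable_of_finite y).aemeasurable
    (.of_forall hy) ((integral_eq y).trans hmean)).mgf_le t
  rw [ProbabilityTheory.mgf, integral_eq] at hsub
  refine hsub.trans_eq (congrArg Real.exp ?_)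
  simp only [NNReal.coe_pow, NNReal.coe_div, coe_nnnorm, Real.norm_eq_abs, NNReal.coe_ofNat,
    div_pow, sq_abs]
  ring

theorem decomposeFin_symm_mul_swap {M : ℕ} (a : Fin (M + 1)) (π : Equiv.Perm (Fin M))
    (b c : Fin M) :
    Equiv.Perm.decomposeFin.symm (a, π * Equiv.swap b c) =
      Equiv.Perm.decomposeFin.symm (a, π) * Equiv.swap b.succ c.succ := by
  ext x
  refine Fin.cases ?_ (fun y => ?_) x
  · simp [Equiv.swap_apply_of_ne_of_ne (Fin.succ_ne_zero b).symm (Fin.succ_ne_zero c).symm]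
  · have hswap : Equiv.swap b.succ c.succ y.succ = (Equiv.swap b c y).succ := by
      simp only [Equiv.swap_apply_def, Fin.succ_inj]
      split_ifs <;> rfl
    simp [hswap]

theorem exists_decomposeFin_symm_eq_mul_swap {M : ℕ} (a : Fin (M + 1)) (π : Equiv.Perm (Fin M)) :
    ∃ b c, Equiv.Perm.decomposeFin.symm (a, π) =
      Equiv.Perm.decomposeFin.symm (0, π) * Equiv.swap b c := by
  set ρ := Equiv.Perm.decomposeFin.symm (0, π) with hρ
  refine ⟨ρ⁻¹ 0, ρ⁻¹ a, ?_⟩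
  rw [Equiv.mul_swap_eq_swap_mul]
  ext x
  refine Fin.cases ?_ (fun y => ?_) x <;> simp [hρ]

theorem expect_perm_fin_succ {M : ℕ} (f : Equiv.Perm (Fin (M + 1)) → ℝ) :
    𝔼 π, f π = 𝔼 a, 𝔼 π, f (Equiv.Perm.decomposeFin.symm (a, π)) := by
  rw [← expect_product', univ_product_univ]
  exact Fintype.expect_equiv Equiv.Perm.decomposeFin _ _ fun π => by simp

theorem expect_exp_condMean_sub_le {L : ℝ} (t : ℝ) {M : ℕ} {F : Equiv.Perm (Fin (M + 1)) → ℝ}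
    (hF : ∀ π b c, |F (π * Equiv.swap b c) - F π| ≤ L) :
    𝔼 a, Real.exp (t * (𝔼 π, F (Equiv.Perm.decomposeFin.symm (a, π)) - 𝔼 π, F π)) ≤
      Real.exp (t ^ 2 * L ^ 2 / 2) := by
  set A : Fin (M + 1) → ℝ := fun a => 𝔼 π, F (Equiv.Perm.decomposeFin.symm (a, π)) with hA
  have hclose (a : Fin (M + 1)) : |A a - A 0| ≤ L := by
    rw [hA, ← expect_sub_distrib]
    refine (abs_expect_le _ _).trans (expect_le univ_nonempty fun π _ => ?_)
    obtain ⟨b, c, hbc⟩ := exists_decomposeFin_symm_eq_mul_swap a π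
    simpa only [hbc] using hF _ b c
  have hHoeffding := expect_exp_mul_le_of_mem_Icc (y := fun a => A a - 𝔼 π, F π)
    (a := A 0 - L - 𝔼 π, F π) (b := A 0 + L - 𝔼 π, F π)
    (fun a => by
      have := abs_le.mp (hclose a)
      constructor <;> linarith)
    (by rw [expect_sub_distrib, Fintype.expect_const, expect_perm_fin_succ, sub_self]) t
  refine hHoeffding.trans_eq (congrArg Real.exp ?_)
  ring

theorem expect_exp_sub_expect_le_fin {L : ℝ} (t : ℝ) {M : ℕ} {F : Equiv.Perm (Fin M) → ℝ}
    (hF : ∀ π b c, |F (π * Equiv.swap b c) - F π| ≤ L) :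
    𝔼 π, Real.exp (t * (F π - 𝔼 ρ, F ρ)) ≤ Real.exp (t ^ 2 * L ^ 2 * M / 2) := by
  induction M with
  | zero => simp
  | succ M ih =>
    let G (a : Fin (M + 1)) (π : Equiv.Perm (Fin M)) : ℝ := F (Equiv.Perm.decomposeFin.symm (a, π))
    calc 𝔼 π, Real.exp (t * (F π - 𝔼 ρ, F ρ))
        = 𝔼 a, Real.exp (t * (𝔼 π, G a π - 𝔼 π, F π)) *
            𝔼 π, Real.exp (t * (G a π - 𝔼 ρ, G a ρ)) := by
          rw [expect_perm_fin_succ]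
          refine expect_congr rfl fun a _ => ?_
          rw [mul_expect]
          refine expect_congr rfl fun π _ => ?_
          rw [← Real.exp_add]
          congr 1
          ring
      _ ≤ 𝔼 a, Real.exp (t * (𝔼 π, G a π - 𝔼 π, F π)) * Real.exp (t ^ 2 * L ^ 2 * M / 2) := by
          gcongr with a
          exact ih fun π b c => by
            simpa only [G, decomposeFin_symm_mul_swap] using hF _ b.succ c.succ
      _ ≤ Real.exp (t ^ 2 * L ^ 2 / 2) * Real.exp (t ^ 2 * L ^ 2 * M / 2) := by
          rw [← expect_mul]
          gcongr
          exact expect_exp_condMean_sub_le t hF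
      _ = Real.exp (t ^ 2 * L ^ 2 * (M + 1 : ℕ) / 2) := by
          rw [← Real.exp_add]
          congr 1
          push_cast
          ring

theorem expect_exp_sub_expect_le {α : Type*} [Fintype α] [DecidableEq α] {L : ℝ} (t : ℝ)
    {F : Equiv.Perm α → ℝ} (hF : ∀ π b c, |F (π * Equiv.swap b c) - F π| ≤ L) :
    𝔼 π, Real.exp (t * (F π - 𝔼 ρ, F ρ)) ≤
      Real.exp (t ^ 2 * L ^ 2 * Fintype.card α / 2) := by
  let e := (Fintype.equivFin α).symm.permCongr
  have he (f : Equiv.Perm α → ℝ) : 𝔼 π, f π = 𝔼 π, f (e π) :=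
    (Fintype.expect_equiv e _ _ fun _ => rfl).symm
  rw [he, he F]
  refine expect_exp_sub_expect_le_fin t fun π b c => ?_
  have hswap : e (π * Equiv.swap b c) =
      e π * Equiv.swap ((Fintype.equivFin α).symm b) ((Fintype.equivFin α).symm c) := by
    rw [Equiv.mul_swap_eq_swap_mul, Equiv.mul_swap_eq_swap_mul]
    ext x
    simp [e, Equiv.permCongr_apply, (Fintype.equivFin α).symm.injective.swap_apply]
  rw [hswap]
  exact hF _ _ _

end PermutationConcentration

section Tilting

variable {ι : Type*} [Fintype ι] {Z u : ι → ℝ}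

/-- Jensen's inequality for the exponential under the measure of density `Z`, in the form of its
tangent line at the bound `-L` for the tilted mean. -/
theorem exp_mul_expect_le_expect_mul_exp {L τ : ℝ} (hZ : ∀ i, 0 ≤ Z i) (hτ : 0 ≤ τ)
    (hdrift : 𝔼 i, Z i * u i ≤ -L * 𝔼 i, Z i) :
    Real.exp (τ * L) * 𝔼 i, Z i ≤ 𝔼 i, Z i * Real.exp (-τ * u i) := by
  have htangent (i : ι) : Real.exp (τ * L) * (Z i - τ * (Z i * u i + L * Z i)) ≤
      Z i * Real.exp (-τ * u i) := by
    have h := mul_le_mul_of_nonneg_left (Real.add_one_le_exp (-τ * u i - τ * L))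
      (mul_nonneg (hZ i) (Real.exp_nonneg (τ * L)))
    have hexp : Real.exp (τ * L) * Real.exp (-τ * u i - τ * L) = Real.exp (-τ * u i) := by
      rw [← Real.exp_add, add_sub_cancel]
    rw [mul_assoc (Z i) (Real.exp _) (Real.exp _), hexp] at h
    linarith
  calc Real.exp (τ * L) * 𝔼 i, Z i
      ≤ Real.exp (τ * L) * (𝔼 i, Z i - τ * (𝔼 i, Z i * u i + L * 𝔼 i, Z i)) := by
        gcongr
        nlinarith
    _ = 𝔼 i, Real.exp (τ * L) * (Z i - τ * (Z i * u i + L * Z i)) := by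
        simp only [← mul_expect, expect_sub_distrib, expect_add_distrib]
    _ ≤ 𝔼 i, Z i * Real.exp (-τ * u i) := expect_le_expect fun i _ => htangent i

theorem sq_expect_mul_exp_le (Z u : ι → ℝ) (t : ℝ) :
    (𝔼 i, Z i * Real.exp (t * u i)) ^ 2 ≤ (𝔼 i, Z i ^ 2) * 𝔼 i, Real.exp (2 * t * u i) := by
  simp only [Fintype.expect_eq_sum_div_card, div_pow, div_mul_div_comm, ← sq]
  gcongr
  refine (sum_mul_sq_le_sq_mul_sq univ Z fun i => Real.exp (t * u i)).trans_eq ?_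
  simp only [← Real.exp_nat_mul, Nat.cast_ofNat, mul_assoc]

theorem exp_mul_sq_expect_le {v L : ℝ} (hZ : ∀ i, 0 ≤ Z i) (hv : 0 < v) (hL : 0 ≤ L)
    (hmgf : ∀ t : ℝ, 𝔼 i, Real.exp (t * u i) ≤ Real.exp (v * t ^ 2 / 2))
    (hdrift : 𝔼 i, Z i * u i ≤ -L * 𝔼 i, Z i) :
    Real.exp (L ^ 2 / (2 * v)) * (𝔼 i, Z i) ^ 2 ≤ 𝔼 i, Z i ^ 2 := by
  set τ := L / (2 * v) with hτ
  have hexp : Real.exp (L ^ 2 / (2 * v)) * Real.exp (v * (2 * -τ) ^ 2 / 2) =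
      Real.exp (τ * L) ^ 2 := by
    rw [← Real.exp_add, ← Real.exp_nat_mul, hτ]
    congr 1
    field_simp
    ring
  have hZ0 : 0 ≤ 𝔼 i, Z i := expect_nonneg fun i _ => hZ i
  refine le_of_mul_le_mul_right ?_ (Real.exp_pos (v * (2 * -τ) ^ 2 / 2))
  calc Real.exp (L ^ 2 / (2 * v)) * (𝔼 i, Z i) ^ 2 * Real.exp (v * (2 * -τ) ^ 2 / 2)
      = (Real.exp (τ * L) * 𝔼 i, Z i) ^ 2 := by rw [mul_right_comm, hexp, mul_pow]
    _ ≤ (𝔼 i, Z i * Real.exp (-τ * u i)) ^ 2 := by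
        gcongr
        exact exp_mul_expect_le_expect_mul_exp hZ (by positivity) hdrift
    _ ≤ (𝔼 i, Z i ^ 2) * 𝔼 i, Real.exp (2 * -τ * u i) := sq_expect_mul_exp_le Z u _
    _ ≤ (𝔼 i, Z i ^ 2) * Real.exp (v * (2 * -τ) ^ 2 / 2) := by
        gcongr
        exact hmgf _

end Tilting

/-! ### Sets of slots that hit every clause -/

/-- A slot is a position in a formula with `m` clauses of length `k`: a clause and a place in it. -/
abbrev Slot (m k : ℕ) := Fin m × Fin k

/-- Every clause contains a slot of `S`. An assignment satisfies a formula exactly when the set of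
slots holding true literals has this property. -/
def Covers {m k : ℕ} (S : Finset (Slot m k)) : Prop := ∀ i, ∃ j, (i, j) ∈ S

/-- The sets of `T` slots that cover all clauses. -/
def coveringSets (m k T : ℕ) : Finset (Finset (Slot m k)) :=
  univ.filter fun S => S.card = T ∧ Covers S

/-- The places of clause `i` that belong to `S`. -/
def row {m k : ℕ} (S : Finset (Slot m k)) (i : Fin m) : Finset (Fin k) :=
  univ.filter fun j => (i, j) ∈ S

/-- The set of slots with prescribed rows; inverse to `row`. -/
def ofRows {m k : ℕ} (R : Fin m → Finset (Fin k)) : Finset (Slot m k) :=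
  univ.filter fun p => p.2 ∈ R p.1

/-- The slot `q` is the only one of its clause that belongs to `S`, so that removing it from a
covering set leaves its clause uncovered. -/
def IsSole {m k : ℕ} (q : Slot m k) (S : Finset (Slot m k)) : Prop := row S q.1 = {q.2}

/-- Clause `i` has `a` inside and `b` outside `S`, and `a` is the sole slot of clause `i'`. In this
configuration exchanging `(i, b)` with `(i', a)` destroys the covering property. -/
def IsCritical {m k : ℕ} (a b : Fin k) (i i' : Fin m) (S : Finset (Slot m k)) : Prop :=
  (i, a) ∈ S ∧ (i, b) ∉ S ∧ IsSole (i', a) S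

/-- A lower bound for the average frequency of critical configurations in a covering set. -/
def critFreq (k : ℕ) : ℝ := 1 / (2 * (k + 1) * 4 ^ k)

/-- The other slots of the clause of `p`. -/
def mates {m k : ℕ} (p : Slot m k) : Finset (Slot m k) :=
  univ.filter fun q => q.1 = p.1 ∧ q ≠ p

/-- The slots of the other clauses. -/
def strangers {m k : ℕ} (p : Slot m k) : Finset (Slot m k) :=
  univ.filter fun q => q.1 ≠ p.1

/-- The number of ordered pairs of slots of a common clause, the first inside and the second
outside `S`. -/
def mixedPairs {m k : ℕ} (S : Finset (Slot m k)) : ℕ :=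
  ∑ p, ((mates p).filter fun q => p ∈ S ∧ q ∉ S).card

theorem critFreq_pos (k : ℕ) : 0 < critFreq k := by
  unfold critFreq
  positivity

section Covering

variable {m k T : ℕ}

theorem mem_coveringSets {S : Finset (Slot m k)} :
    S ∈ coveringSets m k T ↔ S.card = T ∧ Covers S := by
  simp [coveringSets]

theorem mem_row {S : Finset (Slot m k)} {i : Fin m} {j : Fin k} : j ∈ row S i ↔ (i, j) ∈ S := by
  simp [row]

theorem row_ofRows (R : Fin m → Finset (Fin k)) : row (ofRows R) = R := by
  ext i j
  simp [row, ofRows]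

theorem row_injective : Function.Injective (row : Finset (Slot m k) → Fin m → Finset (Fin k)) := by
  intro S S' h
  ext ⟨i, j⟩
  rw [← mem_row, h, mem_row]

theorem covers_iff_row_nonempty {S : Finset (Slot m k)} : Covers S ↔ ∀ i, (row S i).Nonempty := by
  simp only [Covers, Finset.Nonempty, mem_row]

theorem IsSole.mem {q : Slot m k} {S : Finset (Slot m k)} (h : IsSole q S) : q ∈ S := by
  rw [← Prod.mk.eta (p := q), ← mem_row, h, mem_singleton]

theorem sum_card_row (S : Finset (Slot m k)) : ∑ i, (row S i).card = S.card := by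
  simp only [row, card_filter]
  rw [← Fintype.sum_prod_type' fun i j => if (i, j) ∈ S then 1 else 0]
  simp

theorem card_ofRows (R : Fin m → Finset (Fin k)) : (ofRows R).card = ∑ i, (R i).card := by
  rw [← sum_card_row, row_ofRows]

theorem sum_card_update_add {ι α : Type*} [Fintype ι] [DecidableEq ι] (R : ι → Finset α) (i : ι)
    (V : Finset α) :
    ∑ x, (Function.update R i V x).card + (R i).card = ∑ x, (R x).card + V.card := by
  rw [← add_sum_erase _ _ (mem_univ i), ← add_sum_erase univ (fun x => (R x).card) (mem_univ i),
    Function.update_self, sum_congr rfl fun x hx => by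
      rw [Function.update_of_ne (ne_of_mem_erase hx)]]
  ring

theorem exists_card_eq_mem_notMem {a b : Fin k} (hab : a ≠ b) {s : ℕ} (hs : 1 ≤ s) (hsk : s < k) :
    ∃ V : Finset (Fin k), V.card = s ∧ a ∈ V ∧ b ∉ V := by
  obtain ⟨V, haV, hVb, hcard⟩ := exists_subsuperset_card_eq (s := {a}) (t := univ.erase b) (n := s)
    (by simpa using hab) (by simpa using hs)
    (by rw [card_erase_of_mem (mem_univ _), card_univ, Fintype.card_fin]; omega)
  exact ⟨V, hcard, singleton_subset_iff.1 haV, fun hb => notMem_erase b univ (hVb hb)⟩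

theorem ofRows_update_mem_filter_isCritical {a b : Fin k} {i i' : Fin m} (hi : i ≠ i')
    {V : Finset (Fin k)} (ha : a ∈ V) (hb : b ∉ V) {S : Finset (Slot m k)}
    (hS : S ∈ coveringSets m k T) (hV : V.card + 1 = (row S i).card + (row S i').card) :
    ofRows (Function.update (Function.update (row S) i V) i' {a}) ∈
      (coveringSets m k T).filter (IsCritical a b i i') := by
  set R := Function.update (Function.update (row S) i V) i' {a} with hR
  have hRi : R i = V := by simp [R, hi]
  have hRi' : R i' = {a} := by simp [R]
  obtain ⟨hcard, hcov⟩ := mem_coveringSets.mp hS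
  refine mem_filter.mpr ⟨mem_coveringSets.mpr ⟨?_, ?_⟩, ?_⟩
  · have h₁ := sum_card_update_add (row S) i V
    have h₂ := sum_card_update_add (Function.update (row S) i V) i' {a}
    rw [Function.update_of_ne hi.symm, card_singleton] at h₂
    rw [sum_card_row] at h₁
    rw [card_ofRows, hR]
    omega
  · rw [covers_iff_row_nonempty, row_ofRows]
    intro r
    rcases eq_or_ne r i' with rfl | hr'
    · exact hRi' ▸ singleton_nonempty a
    rcases eq_or_ne r i with rfl | hr
    · exact ⟨a, hRi ▸ ha⟩
    · simpa only [R, Function.update_of_ne hr', Function.update_of_ne hr] using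
        covers_iff_row_nonempty.mp hcov r
  · rw [IsCritical, IsSole, ← mem_row, ← mem_row, row_ofRows, hRi, hRi']
    exact ⟨ha, hb, rfl⟩

/-- The rearrangement of the rows `i` and `i'` into a critical configuration forgets only these two
rows, that is, one of at most `2 ^ k * 2 ^ k` possibilities. -/
theorem card_filter_row_add_row_le {a b : Fin k} (hab : a ≠ b) {i i' : Fin m} (hi : i ≠ i') :
    ((coveringSets m k T).filter fun S => (row S i).card + (row S i').card ≤ k).card ≤
      4 ^ k * ((coveringSets m k T).filter (IsCritical a b i i')).card := by
  have hV (s : ℕ) (hs : 2 ≤ s ∧ s ≤ k) : ∃ V : Finset (Fin k), V.card + 1 = s ∧ a ∈ V ∧ b ∉ V := by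
    obtain ⟨V, hcard, hmem⟩ := exists_card_eq_mem_notMem hab (s := s - 1) (by omega) (by omega)
    exact ⟨V, by omega, hmem⟩
  choose! V hVcard hVa hVb using hV
  let R (S : Finset (Slot m k)) : Fin m → Finset (Fin k) :=
    Function.update (Function.update (row S) i (V ((row S i).card + (row S i').card))) i' {a}
  refine card_le_mul_card_image_of_maps_to (f := fun S => ofRows (R S)) (fun S hS => ?_) _
    (fun S₀ _ => ?_)
  · obtain ⟨hmem, hle⟩ := mem_filter.mp hS
    have hcov := covers_iff_row_nonempty.mp (mem_coveringSets.mp hmem).2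
    have hs : 2 ≤ (row S i).card + (row S i').card ∧ (row S i).card + (row S i').card ≤ k :=
      ⟨Nat.add_le_add (hcov i).card_pos (hcov i').card_pos, hle⟩
    exact ofRows_update_mem_filter_isCritical hi (hVa _ hs) (hVb _ hs) hmem (hVcard _ hs)
  · have hpow : 4 ^ k = (univ : Finset (Finset (Fin k) × Finset (Fin k))).card := by
      simp [← mul_pow]
    rw [hpow]
    refine card_le_card_of_injOn (fun S => (row S i, row S i')) (fun _ _ => mem_univ _)
      fun S hS S' hS' hrows => row_injective (funext fun r => ?_)
    obtain ⟨hrow_i, hrow_i'⟩ := Prod.mk.inj hrows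
    have hR : R S = R S' := by
      rw [← row_ofRows (R S), ← row_ofRows (R S'), (mem_filter.mp hS).2, (mem_filter.mp hS').2]
    rcases eq_or_ne r i' with rfl | hr'
    · exact hrow_i'
    rcases eq_or_ne r i with rfl | hr
    · exact hrow_i
    · simpa only [R, Function.update_of_ne hr', Function.update_of_ne hr] using congrFun hR r

/-- Markov's inequality for the sum of two entries. -/
theorem le_sum_sum_erase_ite_add_le {ι : Type*} [Fintype ι] [DecidableEq ι] (r : ι → ℕ) {K : ℕ}
    (hr : 4 * ∑ i, r i ≤ (2 * K + 1) * Fintype.card ι) :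
    (Fintype.card ι : ℝ) * (Fintype.card ι - 1) / (2 * (K + 1)) ≤
      ∑ i, ∑ i' ∈ univ.erase i, if r i + r i' ≤ K then (1 : ℝ) else 0 := by
  set N : ℝ := (Fintype.card ι : ℝ) with hN
  rcases isEmpty_or_nonempty ι with _ | _
  · simp [hN]
  have hN1 : 1 ≤ N := Nat.one_le_cast.mpr Fintype.card_pos
  have hpoint (i i' : ι) : ((K : ℝ) + 1) * (1 - if r i + r i' ≤ K then 1 else 0) ≤ r i + r i' := by
    split_ifs with h
    · simp only [sub_self, mul_zero]
      positivity
    · rw [sub_zero, mul_one]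
      exact_mod_cast not_le.mp h
  have hsum_erase (f : ι → ℝ) (i : ι) : ∑ i' ∈ univ.erase i, f i' = ∑ i', f i' - f i :=
    eq_sub_of_add_eq (sum_erase_add _ _ (mem_univ i))
  have htotal : ∑ i, ∑ i' ∈ univ.erase i, ((r i : ℝ) + r i') = 2 * (N - 1) * ∑ i, (r i : ℝ) := by
    simp only [hsum_erase, sum_sub_distrib, sum_add_distrib, sum_const, card_univ, nsmul_eq_mul,
      ← mul_sum, ← hN]
    ring
  have hle := sum_le_sum fun i (_ : i ∈ univ) => sum_le_sum fun i' (_ : i' ∈ univ.erase i) =>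
    hpoint i i'
  have hr' : 4 * ∑ i, (r i : ℝ) ≤ (2 * K + 1) * N := by
    rw [hN]
    exact_mod_cast hr
  simp only [htotal, ← mul_sum, sum_sub_distrib, hsum_erase fun _ => (1 : ℝ), sum_const, card_univ,
    nsmul_eq_mul, mul_one, ← hN] at hle
  rw [div_le_iff₀ (by positivity)]
  nlinarith

theorem critFreq_mul_card_le_sum_card_isCritical {a b : Fin k} (hab : a ≠ b)
    (hT : 4 * T ≤ (2 * k + 1) * m) :
    critFreq k * (m * (m - 1)) * (coveringSets m k T).card ≤
      ∑ i : Fin m, ∑ i' ∈ univ.erase i,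
        (((coveringSets m k T).filter (IsCritical a b i i')).card : ℝ) := by
  have hmarkov : ∑ S ∈ coveringSets m k T, (m : ℝ) * (m - 1) / (2 * (k + 1)) ≤
      ∑ S ∈ coveringSets m k T, ∑ i : Fin m, ∑ i' ∈ univ.erase i,
        if (row S i).card + (row S i').card ≤ k then (1 : ℝ) else 0 :=
    sum_le_sum fun S hS => by
      simpa using le_sum_sum_erase_ite_add_le (fun i => (row S i).card) (K := k)
        (by simpa [sum_card_row, (mem_coveringSets.mp hS).1] using hT)
  have hswitch : ∑ S ∈ coveringSets m k T, ∑ i : Fin m, ∑ i' ∈ univ.erase i,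
        (if (row S i).card + (row S i').card ≤ k then (1 : ℝ) else 0) ≤
      4 ^ k * ∑ i : Fin m, ∑ i' ∈ univ.erase i,
        (((coveringSets m k T).filter (IsCritical a b i i')).card : ℝ) := by
    rw [sum_comm, mul_sum]
    refine sum_le_sum fun i _ => ?_
    rw [sum_comm, mul_sum]
    refine sum_le_sum fun i' hi' => ?_
    rw [sum_boole]
    exact_mod_cast card_filter_row_add_row_le hab (ne_of_mem_erase hi').symm
  have h := hmarkov.trans hswitch
  rw [sum_const, nsmul_eq_mul, ← div_le_iff₀' (by positivity)] at h
  refine le_of_eq_of_le ?_ h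
  unfold critFreq
  field_simp

theorem covers_map_swap {S : Finset (Slot m k)} (hS : Covers S) {p q q' : Slot m k}
    (hpq : p ≠ q) (hrow : p.1 = q.1) (hp : p ∈ S) (hq' : q' ∉ S) :
    Covers (S.map (Equiv.swap q q').toEmbedding) := by
  have hmem {x : Slot m k} (hxS : x ∈ S) (hxq : x ≠ q) :
      x ∈ S.map (Equiv.swap q q').toEmbedding := by
    refine mem_map.mpr ⟨x, hxS, Equiv.swap_apply_of_ne_of_ne hxq ?_⟩
    rintro rfl
    exact hq' hxS
  intro i
  rcases eq_or_ne i p.1 with rfl | hi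
  · exact ⟨p.2, hmem hp hpq⟩
  · obtain ⟨j, hj⟩ := hS i
    refine ⟨j, hmem hj ?_⟩
    rintro rfl
    exact hi hrow.symm

theorem card_filter_exchange_le {p q q' : Slot m k} (hpq : p ≠ q) (hrow : p.1 = q.1)
    (hq' : q'.1 ≠ p.1) :
    ((coveringSets m k T).filter fun S => p ∈ S ∧ q' ∉ S ∧ q ∈ S).card ≤
      ((coveringSets m k T).filter fun S => p ∈ S ∧ q ∉ S ∧ q' ∈ S ∧ ¬IsSole q' S).card := by
  have hpq' : p ≠ q' := by
    rintro rfl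
    exact hq' rfl
  refine card_le_card_of_injOn (fun S => S.map (Equiv.swap q q').toEmbedding) (fun S hS => ?_)
    (Finset.map_injective _).injOn
  obtain ⟨hA, hp, hq'S, hq⟩ := mem_filter.mp hS
  obtain ⟨hcard, hcov⟩ := mem_coveringSets.mp hA
  refine mem_coe.mpr <| mem_filter.mpr ⟨mem_coveringSets.mpr ⟨by rw [card_map, hcard],
    covers_map_swap hcov hpq hrow hp hq'S⟩, ?_, ?_, ?_, fun hsole => ?_⟩
  · exact mem_map.mpr ⟨p, hp, Equiv.swap_apply_of_ne_of_ne hpq hpq'⟩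
  · simpa [mem_map_equiv] using hq'S
  · simpa [mem_map_equiv] using hq
  · obtain ⟨j, hj⟩ := hcov q'.1
    have hjq : (q'.1, j) ≠ q := by
      rintro rfl
      exact hq' hrow.symm
    have hjq' : (q'.1, j) ≠ q' := by
      intro h
      exact hq'S (h ▸ hj)
    have hmem : j ∈ row (S.map (Equiv.swap q q').toEmbedding) q'.1 :=
      mem_row.mpr (mem_map.mpr ⟨_, hj, Equiv.swap_apply_of_ne_of_ne hjq hjq'⟩)
    rw [hsole, mem_singleton] at hmem
    exact hjq' (Prod.ext rfl hmem)

theorem card_filter_mem_notMem_add_le {p q q' : Slot m k} (hpq : p ≠ q) (hrow : p.1 = q.1)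
    (hq' : q'.1 ≠ p.1) :
    ((coveringSets m k T).filter fun S => p ∈ S ∧ q' ∉ S).card +
        ((coveringSets m k T).filter fun S => p ∈ S ∧ q ∉ S ∧ IsSole q' S).card ≤
      ((coveringSets m k T).filter fun S => p ∈ S ∧ q ∉ S).card := by
  have hexchange := card_filter_exchange_le (T := T) hpq hrow hq'
  set A := coveringSets m k T
  have hsplit₁ := card_filter_add_card_filter_not (s := A.filter fun S => p ∈ S ∧ q' ∉ S)
    fun S => q ∈ S
  have hsplit₂ := card_filter_add_card_filter_not (s := A.filter fun S => p ∈ S ∧ q ∉ S)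
    fun S => q' ∈ S
  have hsplit₃ := card_filter_add_card_filter_not
    (s := A.filter fun S => p ∈ S ∧ q ∉ S ∧ q' ∈ S) fun S => IsSole q' S
  have hsole : (A.filter fun S => p ∈ S ∧ q ∉ S ∧ q' ∈ S ∧ IsSole q' S) =
      A.filter fun S => p ∈ S ∧ q ∉ S ∧ IsSole q' S :=
    filter_congr fun S _ => by
      have : IsSole q' S → q' ∈ S := IsSole.mem
      tauto
  have hcommon : (A.filter fun S => p ∈ S ∧ q' ∉ S ∧ q ∉ S) =
      A.filter fun S => p ∈ S ∧ q ∉ S ∧ q' ∉ S :=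
    filter_congr fun S _ => by tauto
  simp only [filter_filter, and_assoc] at hsplit₁ hsplit₂ hsplit₃
  rw [hcommon] at hsplit₁
  rw [hsole] at hsplit₃
  omega

theorem sum_card_filter_comm {α β : Type*} (s : Finset α) (t : Finset β) (r : α → β → Prop)
    [∀ a b, Decidable (r a b)] :
    ∑ a ∈ s, (t.filter fun b => r a b).card = ∑ b ∈ t, (s.filter fun a => r a b).card :=
  sum_card_bipartiteAbove_eq_sum_card_bipartiteBelow r

theorem card_filter_notMem_le_card_filter_not_isSole (q : Slot m k) :
    ((coveringSets m k T).filter fun S => q ∉ S).card ≤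
      ((coveringSets m k (T + 1)).filter fun S => q ∈ S ∧ ¬IsSole q S).card := by
  refine card_le_card_of_injOn (insert q) (fun S hS => ?_) fun S hS S' hS' h => ?_
  · obtain ⟨hmem, hq⟩ := mem_filter.mp hS
    obtain ⟨hcard, hcov⟩ := mem_coveringSets.mp hmem
    refine mem_coe.mpr <| mem_filter.mpr ⟨mem_coveringSets.mpr
      ⟨by rw [card_insert_of_notMem hq, hcard], fun i => ?_⟩, mem_insert_self q S, fun hsole => ?_⟩
    · exact (hcov i).imp fun j hj => mem_insert_of_mem hj
    · obtain ⟨j, hj⟩ := hcov q.1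
      have hjq : j ∈ row (insert q S) q.1 := mem_row.mpr (mem_insert_of_mem hj)
      rw [hsole, mem_singleton] at hjq
      exact hq (by rwa [hjq] at hj)
  · rw [← erase_insert (mem_filter.mp hS).2, h, erase_insert (mem_filter.mp hS').2]

theorem critFreq_mul_card_le_sum_card_isSole (hk : 2 ≤ k) (hm : 2 ≤ m)
    (hT : 4 * T ≤ (2 * k + 1) * m) :
    critFreq k * m * (coveringSets m k T).card ≤
      ∑ q, (((coveringSets m k T).filter (IsSole q)).card : ℝ) := by
  obtain ⟨a, b, hab⟩ := (Fin.nontrivial_iff_two_le.mpr hk).exists_pair_ne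
  have hm1 : (0 : ℝ) < m - 1 := sub_pos.mpr (by exact_mod_cast hm)
  set f : Slot m k → ℝ := fun q => (((coveringSets m k T).filter (IsSole q)).card : ℝ)
  refine le_of_mul_le_mul_left ?_ hm1
  calc ((m : ℝ) - 1) * (critFreq k * m * (coveringSets m k T).card)
      = critFreq k * (m * (m - 1)) * (coveringSets m k T).card := by ring
    _ ≤ ∑ i : Fin m, ∑ i' ∈ univ.erase i,
          (((coveringSets m k T).filter (IsCritical a b i i')).card : ℝ) :=
        critFreq_mul_card_le_sum_card_isCritical hab hT
    _ ≤ ∑ i : Fin m, ∑ i' ∈ univ.erase i, f (i', a) := by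
        refine sum_le_sum fun i _ => sum_le_sum fun i' _ => ?_
        exact Nat.cast_le.mpr (card_le_card (monotone_filter_right _ fun S _ h => h.2.2))
    _ = (m - 1) * ∑ i', f (i', a) := by
        simp only [fun i : Fin m =>
          eq_sub_of_add_eq (sum_erase_add univ (fun i' => f (i', a)) (mem_univ i)),
          sum_sub_distrib, sum_const, card_univ, Fintype.card_fin, nsmul_eq_mul, sub_mul, one_mul]
    _ ≤ (m - 1) * ∑ q, f q := by
        rw [Fintype.sum_prod_type]
        gcongr with i'
        exact single_le_sum (f := fun j => f (i', j)) (fun _ _ => Nat.cast_nonneg _) (mem_univ a)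

theorem card_coveringSets_succ_ge (hk : 2 ≤ k) (hm : 2 ≤ m)
    (hT : 4 * (T + 1) ≤ (2 * k + 1) * m) :
    ((m : ℝ) * k - T) * (coveringSets m k T).card +
        critFreq k * m * (coveringSets m k (T + 1)).card ≤
      (T + 1) * (coveringSets m k (T + 1)).card := by
  have hbelow : ∑ q, (((coveringSets m k T).filter fun S => q ∉ S).card : ℝ) =
      ((m : ℝ) * k - T) * (coveringSets m k T).card := by
    rw [← Nat.cast_sum, sum_card_filter_comm, Nat.cast_sum, sum_congr rfl fun S hS => ?_, sum_const,
      nsmul_eq_mul, mul_comm]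
    rw [filter_not, filter_mem_eq_inter, univ_inter, ← compl_eq_univ_sdiff, card_compl,
      Nat.cast_sub (card_le_univ S), (mem_coveringSets.mp hS).1]
    simp
  have habove : ∑ q, (((coveringSets m k (T + 1)).filter fun S => q ∈ S).card : ℝ) =
      (T + 1) * (coveringSets m k (T + 1)).card := by
    rw [← Nat.cast_sum, sum_card_filter_comm, sum_congr rfl fun S hS => ?_, sum_const,
      smul_eq_mul, mul_comm, Nat.cast_mul, Nat.cast_succ]
    rw [filter_mem_eq_inter, univ_inter, (mem_coveringSets.mp hS).1]
  have hinsert : ∑ q, (((coveringSets m k T).filter fun S => q ∉ S).card : ℝ) +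
        ∑ q, (((coveringSets m k (T + 1)).filter (IsSole q)).card : ℝ) ≤
      ∑ q, (((coveringSets m k (T + 1)).filter fun S => q ∈ S).card : ℝ) := by
    rw [← sum_add_distrib]
    refine sum_le_sum fun q _ => ?_
    have hsplit := card_filter_add_card_filter_not
      (s := (coveringSets m k (T + 1)).filter fun S => q ∈ S) (IsSole q)
    have hsole : ((coveringSets m k (T + 1)).filter fun S => q ∈ S ∧ IsSole q S) =
        (coveringSets m k (T + 1)).filter (IsSole q) :=
      filter_congr fun S _ => and_iff_right_of_imp IsSole.mem
    rw [filter_filter, filter_filter, hsole] at hsplit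
    have := card_filter_notMem_le_card_filter_not_isSole (T := T) q
    exact_mod_cast (by omega)
  have hsole := critFreq_mul_card_le_sum_card_isSole hk hm hT
  linarith

theorem sum_mates_add_sum_strangers {M : Type*} [AddCommMonoid M] (p : Slot m k)
    (f : Slot m k → M) : f p + ∑ q ∈ mates p, f q + ∑ q ∈ strangers p, f q = ∑ q, f q := by
  have hmates : mates p = (univ.filter fun q : Slot m k => q.1 = p.1).erase p := by
    ext q
    simp [mates, and_comm]
  rw [hmates, add_sum_erase _ _ (by simp), strangers, sum_filter_add_sum_filter_not]

theorem card_strangers (p : Slot m k) : ((strangers p).card : ℝ) = m * k - k := by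
  have hprod : strangers p = univ.erase p.1 ×ˢ univ := by
    ext ⟨i, j⟩
    simp [strangers]
  have hm : 1 ≤ m := p.1.pos
  rw [hprod, card_product, card_erase_of_mem (mem_univ _), card_univ, card_univ, Fintype.card_fin,
    Fintype.card_fin, Nat.cast_mul, Nat.cast_pred hm]
  ring

theorem card_mates (p : Slot m k) : ((mates p).card : ℝ) = k - 1 := by
  have h := sum_mates_add_sum_strangers p fun _ => (1 : ℝ)
  simp only [sum_const, nsmul_eq_mul, mul_one, card_strangers, card_univ, Fintype.card_prod,
    Fintype.card_fin, Nat.cast_mul] at h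
  linarith

theorem sum_card_filter_mem_notMem :
    ∑ p, ∑ q, (((coveringSets m k T).filter fun S => p ∈ S ∧ q ∉ S).card : ℝ) =
      T * (m * k - T) * (coveringSets m k T).card := by
  rw [← Fintype.sum_prod_type' fun p q : Slot m k =>
    (((coveringSets m k T).filter fun S => p ∈ S ∧ q ∉ S).card : ℝ), ← Nat.cast_sum,
    sum_card_filter_comm univ _ fun (x : Slot m k × Slot m k) S => x.1 ∈ S ∧ x.2 ∉ S, Nat.cast_sum,
    sum_congr rfl fun S hS => ?_, sum_const, nsmul_eq_mul, mul_comm]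
  have hprod : (univ.filter fun x : Slot m k × Slot m k => x.1 ∈ S ∧ x.2 ∉ S) = S ×ˢ Sᶜ := by
    ext x
    simp
  rw [hprod, card_product, card_compl, Nat.cast_mul, Nat.cast_sub (card_le_univ S),
    (mem_coveringSets.mp hS).1]
  simp

theorem sum_mates_card_filter_mem_notMem :
    ∑ p, ∑ q ∈ mates p, (((coveringSets m k T).filter fun S => p ∈ S ∧ q ∉ S).card : ℝ) =
      ∑ S ∈ coveringSets m k T, (mixedPairs S : ℝ) := by
  simp only [mixedPairs, ← Nat.cast_sum]
  rw [sum_comm (s := coveringSets m k T)]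
  exact congrArg _ (sum_congr rfl fun p _ => sum_card_filter_comm _ _ _)

theorem sum_card_isCritical_le_sum_card {a b : Fin k} (hab : a ≠ b) :
    ∑ i : Fin m, ∑ i' ∈ univ.erase i,
        (((coveringSets m k T).filter (IsCritical a b i i')).card : ℝ) ≤
      ∑ p, ∑ q ∈ mates p, ∑ q' ∈ strangers p,
        (((coveringSets m k T).filter fun S => p ∈ S ∧ q ∉ S ∧ IsSole q' S).card : ℝ) := by
  rw [Fintype.sum_prod_type]
  refine sum_le_sum fun i _ => ?_
  set c : Slot m k → Slot m k → Slot m k → ℝ := fun p q q' =>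
    (((coveringSets m k T).filter fun S => p ∈ S ∧ q ∉ S ∧ IsSole q' S).card : ℝ)
  have hc (p q q') : 0 ≤ c p q q' := Nat.cast_nonneg _
  have hsum_nonneg (p q) : 0 ≤ ∑ q' ∈ strangers p, c p q q' := sum_nonneg fun q' _ => hc p q q'
  calc ∑ i' ∈ univ.erase i, (((coveringSets m k T).filter (IsCritical a b i i')).card : ℝ)
      = ∑ q' ∈ univ.erase i ×ˢ {a}, c (i, a) (i, b) q' := by
        rw [sum_product]
        simp only [sum_singleton, c, IsCritical]
        congr!
    _ ≤ ∑ q' ∈ strangers (i, a), c (i, a) (i, b) q' := by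
        refine sum_le_sum_of_subset_of_nonneg (fun q' hq' => ?_) fun q' _ _ => hc _ _ q'
        simpa [strangers] using (mem_product.mp hq').1
    _ ≤ ∑ q ∈ mates (i, a), ∑ q' ∈ strangers (i, a), c (i, a) q q' :=
        single_le_sum (f := fun q => ∑ q' ∈ strangers (i, a), c (i, a) q q')
          (fun q _ => hsum_nonneg _ q) (by simp [mates, hab.symm])
    _ ≤ ∑ j, ∑ q ∈ mates (i, j), ∑ q' ∈ strangers (i, j), c (i, j) q q' :=
        single_le_sum (f := fun j => ∑ q ∈ mates (i, j), ∑ q' ∈ strangers (i, j), c (i, j) q q')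
          (fun j _ => sum_nonneg fun q _ => hsum_nonneg _ q) (mem_univ a)

/-- Covering sets have more mixed pairs than arbitrary sets of the same size, for which the average
of `mixedPairs` is `(k - 1) * T * (m * k - T) / (m * k - 1)`. -/
theorem sum_mixedPairs_ge (hk : 2 ≤ k) (hT : 4 * T ≤ (2 * k + 1) * m) :
    ((k : ℝ) - 1) * T * (m * k - T) * (coveringSets m k T).card +
        critFreq k * (m * (m - 1)) * (coveringSets m k T).card ≤
      ((m : ℝ) * k - 1) * ∑ S ∈ coveringSets m k T, (mixedPairs S : ℝ) := by
  obtain ⟨a, b, hab⟩ := (Fin.nontrivial_iff_two_le.mpr hk).exists_pair_ne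
  have hcrit := (critFreq_mul_card_le_sum_card_isCritical hab hT).trans
    (sum_card_isCritical_le_sum_card hab)
  rw [← sum_mates_card_filter_mem_notMem]
  set u : Slot m k → Slot m k → ℝ := fun p q =>
    (((coveringSets m k T).filter fun S => p ∈ S ∧ q ∉ S).card : ℝ) with hu
  set c : Slot m k → Slot m k → Slot m k → ℝ := fun p q q' =>
    (((coveringSets m k T).filter fun S => p ∈ S ∧ q ∉ S ∧ IsSole q' S).card : ℝ)
  have hexchange : ∑ p, ∑ q ∈ mates p, ∑ q' ∈ strangers p, (u p q' + c p q q') ≤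
      ∑ p, ∑ q ∈ mates p, ∑ _q' ∈ strangers p, u p q := by
    refine sum_le_sum fun p _ => sum_le_sum fun q hq => sum_le_sum fun q' hq' => ?_
    simp only [mates, strangers, mem_filter, mem_univ, true_and] at hq hq'
    simp only [u, c]
    exact_mod_cast card_filter_mem_notMem_add_le (T := T) (Ne.symm hq.2) hq.1.symm hq'
  have htotal : ∑ p, ∑ q ∈ mates p, u p q + ∑ p, ∑ q ∈ strangers p, u p q =
      T * (m * k - T) * (coveringSets m k T).card := by
    rw [← sum_card_filter_mem_notMem, ← sum_add_distrib]
    refine sum_congr rfl fun p _ => ?_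
    rw [← sum_mates_add_sum_strangers p (u p)]
    simp [hu]
  simp only [sum_add_distrib, sum_const, nsmul_eq_mul, card_mates, card_strangers, ← mul_sum]
    at hexchange
  nlinarith

end Covering

/-! ### Pair sums along a uniformly random permutation -/

/-- The permutations that map `S` onto `R`. -/
def permsCarrying {α : Type*} [Fintype α] [DecidableEq α] (S R : Finset α) :
    Finset (Equiv.Perm α) :=
  univ.filter fun π => ∀ p, p ∈ S ↔ π p ∈ R

/-- The mean of `y` over `R`. -/
def meanOn {α : Type*} (y : α → ℝ) (R : Finset α) : ℝ := (∑ a ∈ R, y a) / R.card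

/-- The mean of `y a * y b` over the ordered pairs of distinct elements of `R`. -/
def pairMean {α : Type*} (y : α → ℝ) (R : Finset α) : ℝ :=
  ((∑ a ∈ R, y a) ^ 2 - ∑ a ∈ R, y a ^ 2) / (R.card * (R.card - 1))

/-- The sum of `y p * y q` over the ordered pairs of distinct slots of a common clause. -/
def pairStat {m k : ℕ} (y : Slot m k → ℝ) : ℝ := ∑ p, ∑ q ∈ mates p, y p * y q

theorem sum_sum_erase_mul {α : Type*} [DecidableEq α] (S : Finset α) (y : α → ℝ) :
    ∑ a ∈ S, ∑ b ∈ S.erase a, y a * y b = (∑ a ∈ S, y a) ^ 2 - ∑ a ∈ S, y a ^ 2 := by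
  rw [sq, sum_mul_sum, ← sum_sub_distrib]
  refine sum_congr rfl fun a ha => ?_
  rw [← add_sum_erase S _ ha]
  ring

section Carrying

variable {α : Type*} [Fintype α] [DecidableEq α] {S S' R : Finset α}

theorem mem_permsCarrying {π : Equiv.Perm α} :
    π ∈ permsCarrying S R ↔ ∀ p, p ∈ S ↔ π p ∈ R := by
  simp [permsCarrying]

theorem mem_permsCarrying_iff_map_symm_eq {π : Equiv.Perm α} :
    π ∈ permsCarrying S R ↔ R.map π.symm.toEmbedding = S := by
  simp only [mem_permsCarrying, Finset.ext_iff, mem_map_equiv, Equiv.symm_symm]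
  exact forall_congr' fun p => Iff.comm

theorem permsCarrying_compl : permsCarrying Sᶜ Rᶜ = permsCarrying S R := by
  ext π
  simp only [mem_permsCarrying, mem_compl, not_iff_not]

theorem permsCarrying_univ : permsCarrying (univ : Finset α) univ = univ := by
  ext π
  simp [mem_permsCarrying]

theorem sum_permsCarrying_mul {M : Type*} [AddCommMonoid M] {e : Equiv.Perm α}
    (he : ∀ p, p ∈ S' ↔ e p ∈ S) (f : Equiv.Perm α → M) :
    ∑ π ∈ permsCarrying S R, f (π * e) = ∑ π ∈ permsCarrying S' R, f π := by
  refine sum_equiv (Equiv.mulRight e) (fun π => ?_) fun π _ => rfl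
  simp only [mem_permsCarrying, Equiv.coe_mulRight, Equiv.Perm.mul_apply, he]
  exact (e.forall_congr_left (p := fun p => e p ∈ S ↔ π (e p) ∈ R)).trans (by simp) |>.symm

theorem card_permsCarrying_congr (h : S.card = S'.card) :
    (permsCarrying S R).card = (permsCarrying S' R).card := by
  let e₀ : {x // x ∈ S'} ≃ {x // x ∈ S} := Fintype.equivOfCardEq (by simp [h])
  have he (p : α) : p ∈ S' ↔ e₀.extendSubtype p ∈ S := by
    by_cases hp : p ∈ S'
    · simp [hp, e₀.extendSubtype_mem p hp]
    · simp [hp, e₀.extendSubtype_not_mem p hp]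
  simpa using sum_permsCarrying_mul (R := R) he fun _ => (1 : ℕ)

theorem sum_map_of_mem_permsCarrying {π : Equiv.Perm α} (hπ : π ∈ permsCarrying S R)
    (y : α → ℝ) : ∑ p ∈ S, y (π p) = ∑ a ∈ R, y a :=
  sum_equiv π (mem_permsCarrying.mp hπ) fun _ _ => rfl

theorem sum_mul_eq_of_mem_iff (y : α → ℝ) {p q q' : α} (hq : p ≠ q) (hq' : p ≠ q')
    (hS : q ∈ S ↔ q' ∈ S) :
    ∑ π ∈ permsCarrying S R, y (π p) * y (π q) = ∑ π ∈ permsCarrying S R, y (π p) * y (π q') := by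
  have he (x : α) : x ∈ S ↔ Equiv.swap q q' x ∈ S := by
    rw [Equiv.swap_apply_def]
    split_ifs with h₁ h₂
    · rw [h₁, hS]
    · rw [h₂, hS]
    · rfl
  rw [← sum_permsCarrying_mul (R := R) he]
  simp [Equiv.swap_apply_of_ne_of_ne hq hq']

theorem sum_permsCarrying_mul_comm (y : α → ℝ) (p q : α) :
    ∑ π ∈ permsCarrying S R, y (π p) * y (π q) = ∑ π ∈ permsCarrying S R, y (π q) * y (π p) :=
  sum_congr rfl fun _ _ => mul_comm _ _

theorem sum_mul_eq_of_mem_of_mem (y : α → ℝ) {p q a b : α} (hp : p ∈ S) (hq : q ∈ S) (ha : a ∈ S)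
    (hb : b ∈ S) (hpq : p ≠ q) (hab : a ≠ b) :
    ∑ π ∈ permsCarrying S R, y (π a) * y (π b) = ∑ π ∈ permsCarrying S R, y (π p) * y (π q) := by
  rcases eq_or_ne p b with rfl | hpb
  · rw [sum_permsCarrying_mul_comm, sum_mul_eq_of_mem_iff y hab.symm hpq (by simp [ha, hq])]
  · rw [sum_permsCarrying_mul_comm, sum_mul_eq_of_mem_iff y hab.symm hpb.symm (by simp [ha, hp]),
      sum_permsCarrying_mul_comm, sum_mul_eq_of_mem_iff y hpb hpq (by simp [hb, hq])]

theorem sum_permsCarrying_mul_of_mem_of_mem (hcard : S.card = R.card) (y : α → ℝ) {p q : α}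
    (hp : p ∈ S) (hq : q ∈ S) (hpq : p ≠ q) :
    ∑ π ∈ permsCarrying S R, y (π p) * y (π q) = (permsCarrying S R).card * pairMean y R := by
  have hS : (1 : ℝ) < S.card := by exact_mod_cast one_lt_card.mpr ⟨p, hp, q, hq, hpq⟩
  have hsum : ∑ a ∈ S, ∑ b ∈ S.erase a, ∑ π ∈ permsCarrying S R, y (π a) * y (π b) =
      (permsCarrying S R).card * ((∑ a ∈ R, y a) ^ 2 - ∑ a ∈ R, y a ^ 2) := by
    rw [sum_congr rfl fun a _ => sum_comm, sum_comm, sum_congr rfl fun π hπ => ?_, sum_const,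
      nsmul_eq_mul]
    rw [sum_sum_erase_mul S fun a => y (π a), sum_map_of_mem_permsCarrying hπ y,
      sum_map_of_mem_permsCarrying hπ fun a => y a ^ 2]
  rw [sum_congr rfl fun a ha => sum_congr rfl fun b hb => sum_mul_eq_of_mem_of_mem y hp hq ha
    (mem_of_mem_erase hb) hpq (ne_of_mem_erase hb).symm] at hsum
  simp only [sum_const, nsmul_eq_mul] at hsum
  rw [sum_congr rfl fun a ha => by
    rw [card_erase_of_mem ha, Nat.cast_pred (card_pos.mpr ⟨p, hp⟩)], sum_const, nsmul_eq_mul]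
    at hsum
  rw [pairMean, ← hcard, mul_div_assoc', eq_div_iff (by nlinarith), ← hsum]
  ring

theorem sum_permsCarrying_mul_of_mem_of_notMem (hcard : S.card = R.card) (y : α → ℝ) {p q : α}
    (hp : p ∈ S) (hq : q ∉ S) :
    ∑ π ∈ permsCarrying S R, y (π p) * y (π q) =
      (permsCarrying S R).card * (meanOn y R * meanOn y Rᶜ) := by
  have hne {a b : α} (ha : a ∈ S) (hb : b ∉ S) : a ≠ b := fun h => hb (h ▸ ha)
  have hconst : ∀ a ∈ S, ∀ b ∈ Sᶜ, ∑ π ∈ permsCarrying S R, y (π a) * y (π b) =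
      ∑ π ∈ permsCarrying S R, y (π p) * y (π q) := fun a ha b hb => by
    rw [mem_compl] at hb
    rw [sum_mul_eq_of_mem_iff y (hne ha hb) (hne ha hq) (by simp [hb, hq]),
      sum_permsCarrying_mul_comm,
      sum_mul_eq_of_mem_iff y (hne ha hq).symm (hne hp hq).symm (by simp [ha, hp]),
      sum_permsCarrying_mul_comm]
  have hsum : ∑ a ∈ S, ∑ b ∈ Sᶜ, ∑ π ∈ permsCarrying S R, y (π a) * y (π b) =
      (permsCarrying S R).card * ((∑ a ∈ R, y a) * ∑ a ∈ Rᶜ, y a) := by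
    rw [sum_congr rfl fun a _ => sum_comm, sum_comm, sum_congr rfl fun π hπ => ?_, sum_const,
      nsmul_eq_mul]
    rw [← sum_mul_sum, sum_map_of_mem_permsCarrying hπ y,
      sum_map_of_mem_permsCarrying (S := Sᶜ) (R := Rᶜ) (by rwa [permsCarrying_compl]) y]
  rw [sum_congr rfl fun a ha => sum_congr rfl (hconst a ha)] at hsum
  simp only [sum_const, nsmul_eq_mul] at hsum
  have hcompl : Sᶜ.card = Rᶜ.card := by rw [card_compl, card_compl, hcard]
  have hS : (S.card : ℝ) ≠ 0 := Nat.cast_ne_zero.mpr (card_pos.mpr ⟨p, hp⟩).ne'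
  have hSc : (Sᶜ.card : ℝ) ≠ 0 :=
    Nat.cast_ne_zero.mpr (card_pos.mpr ⟨q, mem_compl.mpr hq⟩).ne'
  rw [meanOn, meanOn, ← hcard, ← hcompl, div_mul_div_comm, mul_div_assoc',
    eq_div_iff (mul_ne_zero hS hSc), ← hsum]
  ring

theorem card_mul_pairMean_univ (y : α → ℝ) (hR : 2 ≤ R.card) (hRc : 2 ≤ Rᶜ.card) :
    Fintype.card α * pairMean y univ =
      (R.card * (R.card - 1) * pairMean y R + Rᶜ.card * (Rᶜ.card - 1) * pairMean y Rᶜ +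
        2 * (R.card * Rᶜ.card) * (meanOn y R * meanOn y Rᶜ)) / (Fintype.card α - 1) := by
  have hcard : (Fintype.card α : ℝ) = R.card + Rᶜ.card := by
    exact_mod_cast (card_add_card_compl R).symm
  have hR' : (2 : ℝ) ≤ R.card := by exact_mod_cast hR
  have hRc' : (2 : ℝ) ≤ Rᶜ.card := by exact_mod_cast hRc
  rw [pairMean, pairMean, pairMean, meanOn, meanOn, card_univ, mul_div_cancel₀ _ (by nlinarith),
    mul_div_cancel₀ _ (by nlinarith), div_mul_div_comm, mul_assoc 2,
    mul_div_cancel₀ _ (by nlinarith), ← sum_add_sum_compl R y,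
    ← sum_add_sum_compl R fun a => y a ^ 2, mul_div_assoc', mul_div_mul_left _ _ (by linarith)]
  ring

theorem sq_meanOn_sub_le_pairMean {α : Type*} {y : α → ℝ} {R : Finset α} (hy : ∀ a, |y a| ≤ 1)
    (hR : 2 ≤ R.card) : meanOn y R ^ 2 - 1 / (R.card - 1) ≤ pairMean y R := by
  have hR' : (2 : ℝ) ≤ R.card := by exact_mod_cast hR
  have hsq : ∑ a ∈ R, y a ^ 2 ≤ R.card := by
    simpa using sum_le_card_nsmul R (fun a => y a ^ 2) 1 fun a _ =>
      (sq_le_one_iff_abs_le_one _).mpr (hy a)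
  have hR₀ : (R.card : ℝ) ≠ 0 := by linarith
  have hR₁ : (R.card : ℝ) - 1 ≠ 0 := by linarith
  rw [← sub_nonneg]
  have hdiff : pairMean y R - (meanOn y R ^ 2 - 1 / (R.card - 1)) =
      ((∑ a ∈ R, y a) ^ 2 + R.card * (R.card - ∑ a ∈ R, y a ^ 2)) /
        (R.card ^ 2 * (R.card - 1)) := by
    unfold pairMean meanOn
    field_simp
    ring
  rw [hdiff]
  have := mul_nonneg (Nat.cast_nonneg R.card) (sub_nonneg.mpr hsq)
  exact div_nonneg (by positivity) (mul_nonneg (sq_nonneg _) (by linarith))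

end Carrying

/-- The permutations for which the slots sent into `R` cover all clauses. -/
def coveringPerms {m k : ℕ} (R : Finset (Slot m k)) : Finset (Equiv.Perm (Slot m k)) :=
  univ.filter fun π => Covers (R.map π.symm.toEmbedding)

section PairStat

variable {m k : ℕ}

theorem sum_mates_comm {M : Type*} [AddCommMonoid M] (f : Slot m k → Slot m k → M) :
    ∑ p, ∑ q ∈ mates p, f p q = ∑ p, ∑ q ∈ mates p, f q p :=
  sum_comm' fun p q => by simp [mates, eq_comm]

theorem sum_sum_mates_const (f : Slot m k → ℝ) :
    ∑ p, ∑ _q ∈ mates p, f p = (k - 1) * ∑ p, f p := by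
  simp only [sum_const, nsmul_eq_mul, card_mates, mul_sum]

theorem cast_mixedPairs (S : Finset (Slot m k)) :
    (mixedPairs S : ℝ) = ∑ p, ∑ q ∈ mates p, if p ∈ S ∧ q ∉ S then 1 else 0 := by
  simp only [mixedPairs, card_filter, Nat.cast_sum, Nat.cast_ite, Nat.cast_one, Nat.cast_zero]

theorem mixedPairs_univ : mixedPairs (univ : Finset (Slot m k)) = 0 := by
  simp [mixedPairs]

theorem mixedPairs_le (S : Finset (Slot m k)) : (mixedPairs S : ℝ) ≤ k * (m * k) := by
  calc (mixedPairs S : ℝ)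
      ≤ ∑ p, ∑ _q ∈ mates p, (1 : ℝ) := by
        rw [cast_mixedPairs]
        exact sum_le_sum fun p _ => sum_le_sum fun q _ => by split_ifs <;> norm_num
    _ = (k - 1) * (m * k) := by
        rw [sum_sum_mates_const fun _ => 1]
        simp
    _ ≤ k * (m * k) := by gcongr; linarith

theorem sum_abs_comp_swap_sub_le {α : Type*} [Fintype α] [DecidableEq α] {y : α → ℝ}
    (hy : ∀ a, |y a| ≤ 1) (b c : α) : ∑ a, |y (Equiv.swap b c a) - y a| ≤ 4 := by
  calc ∑ a, |y (Equiv.swap b c a) - y a|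
      = ∑ a ∈ {b, c}, |y (Equiv.swap b c a) - y a| := by
        refine (sum_subset (subset_univ _) fun a _ ha => ?_).symm
        rw [mem_insert, mem_singleton, not_or] at ha
        rw [Equiv.swap_apply_of_ne_of_ne ha.1 ha.2, sub_self, abs_zero]
    _ ≤ ({b, c} : Finset α).card • (2 : ℝ) := sum_le_card_nsmul _ _ _ fun a _ =>
        (abs_sub _ _).trans (by linarith [hy (Equiv.swap b c a), hy a])
    _ ≤ 4 := by
        have : (({b, c} : Finset α).card : ℝ) ≤ 2 := by exact_mod_cast card_le_two
        rw [nsmul_eq_mul]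
        linarith

theorem abs_pairStat_comp_swap_sub_le {y : Slot m k → ℝ} (hy : ∀ p, |y p| ≤ 1) (b c : Slot m k) :
    |pairStat (y ∘ Equiv.swap b c) - pairStat y| ≤ 8 * k := by
  set z := y ∘ Equiv.swap b c
  have hz (p) : |z p| ≤ 1 := hy _
  have hterm (p q) : |z p * z q - y p * y q| ≤ |z p - y p| + |z q - y q| :=
    calc |z p * z q - y p * y q| = |(z p - y p) * z q + y p * (z q - y q)| := by ring_nf
      _ ≤ |z p - y p| * |z q| + |y p| * |z q - y q| := by
          rw [← abs_mul, ← abs_mul]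
          exact abs_add_le _ _
      _ ≤ |z p - y p| * 1 + 1 * |z q - y q| := by gcongr <;> apply_assumption
      _ = |z p - y p| + |z q - y q| := by ring
  calc |pairStat z - pairStat y|
      = |∑ p, ∑ q ∈ mates p, (z p * z q - y p * y q)| := by
        simp only [pairStat, sum_sub_distrib]
    _ ≤ ∑ p, ∑ q ∈ mates p, (|z p - y p| + |z q - y q|) :=
        (abs_sum_le_sum_abs _ _).trans <| sum_le_sum fun p _ =>
          (abs_sum_le_sum_abs _ _).trans <| sum_le_sum fun q _ => hterm p q
    _ = (k - 1) * ∑ p, |z p - y p| + (k - 1) * ∑ p, |z p - y p| := by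
        simp only [sum_add_distrib]
        rw [sum_mates_comm fun _ q => |z q - y q|, sum_sum_mates_const fun p => |z p - y p|]
    _ ≤ 8 * k := by
        have hk : (1 : ℝ) ≤ k := by exact_mod_cast b.2.pos
        have := mul_le_mul_of_nonneg_left (sum_abs_comp_swap_sub_le hy b c) (sub_nonneg.mpr hk)
        simp only [z, Function.comp_apply]
        linarith

theorem sum_permsCarrying_pairStat {S R : Finset (Slot m k)} (hcard : S.card = R.card)
    (y : Slot m k → ℝ) :
    ∑ π ∈ permsCarrying S R, pairStat (y ∘ π) = (permsCarrying S R).card *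
      ((k - 1) * (R.card * pairMean y R + Rᶜ.card * pairMean y Rᶜ) - mixedPairs S *
        (pairMean y R + pairMean y Rᶜ - 2 * (meanOn y R * meanOn y Rᶜ))) := by
  have hcompl : Sᶜ.card = Rᶜ.card := by rw [card_compl, card_compl, hcard]
  set K : ℝ := ((permsCarrying S R).card : ℝ)
  set a := pairMean y R
  set b := pairMean y Rᶜ
  set c := meanOn y R * meanOn y Rᶜ
  have hpair (p) (q) (hq : q ∈ mates p) : ∑ π ∈ permsCarrying S R, y (π p) * y (π q) =
      K * ((if p ∈ S then a else b) + (if p ∈ S ∧ q ∉ S then 1 else 0) * (c - a) +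
        (if q ∈ S ∧ p ∉ S then 1 else 0) * (c - b)) := by
    have hpq : p ≠ q := Ne.symm (mem_filter.mp hq).2.2
    by_cases hp : p ∈ S <;> by_cases hqS : q ∈ S
    · simp [sum_permsCarrying_mul_of_mem_of_mem hcard y hp hqS hpq, hp, hqS, K, a]
    · simp [sum_permsCarrying_mul_of_mem_of_notMem hcard y hp hqS, hp, hqS, K, c]
    · rw [sum_permsCarrying_mul_comm]
      simp [sum_permsCarrying_mul_of_mem_of_notMem hcard y hqS hp, hp, hqS, K, c]
    · have h := sum_permsCarrying_mul_of_mem_of_mem hcompl y (mem_compl.mpr hp) (mem_compl.mpr hqS)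
        hpq
      rw [permsCarrying_compl] at h
      simp [h, hp, hqS, K, b]
  have hsides : ∑ p, ∑ _q ∈ mates p, (if p ∈ S then a else b) =
      (k - 1) * (R.card * a + Rᶜ.card * b) := by
    rw [sum_sum_mates_const, sum_ite, filter_not, filter_mem_eq_inter, univ_inter,
      ← compl_eq_univ_sdiff, sum_const, sum_const, hcard, hcompl, nsmul_eq_mul, nsmul_eq_mul]
  simp only [pairStat, Function.comp_apply]
  rw [sum_comm, sum_congr rfl fun p _ => sum_comm,
    sum_congr rfl fun p _ => sum_congr rfl fun q hq => hpair p q hq]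
  simp only [← mul_sum, sum_add_distrib, ← sum_mul, hsides]
  rw [sum_mates_comm fun p q => if q ∈ S ∧ p ∉ S then (1 : ℝ) else 0, ← cast_mixedPairs]
  ring

theorem expect_pairStat (y : Slot m k → ℝ) :
    𝔼 π : Equiv.Perm (Slot m k), pairStat (y ∘ π) = (k - 1) * (m * k) * pairMean y univ := by
  have h := sum_permsCarrying_pairStat (S := univ) (R := univ) rfl y
  rw [permsCarrying_univ, mixedPairs_univ] at h
  rw [Fintype.expect_eq_sum_div_card, h, card_univ, mul_div_cancel_left₀ _ (by positivity)]
  simp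
  ring

theorem sum_coveringPerms {M : Type*} [AddCommMonoid M] (R : Finset (Slot m k))
    (f : Equiv.Perm (Slot m k) → M) :
    ∑ π ∈ coveringPerms R, f π =
      ∑ S ∈ coveringSets m k R.card, ∑ π ∈ permsCarrying S R, f π := by
  have hmaps : ∀ π ∈ coveringPerms R, R.map π.symm.toEmbedding ∈ coveringSets m k R.card :=
    fun π hπ => mem_coveringSets.mpr ⟨card_map _, (mem_filter.mp hπ).2⟩
  rw [← sum_fiberwise_of_maps_to hmaps]
  refine sum_congr rfl fun S hS => sum_congr ?_ fun _ _ => rfl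
  ext π
  rw [mem_permsCarrying_iff_map_symm_eq, coveringPerms, filter_filter]
  simp only [mem_filter, mem_univ, true_and, and_iff_right_iff_imp]
  rintro rfl
  exact (mem_coveringSets.mp hS).2

theorem card_permsCarrying_mul_choose {α : Type*} [Fintype α] [DecidableEq α]
    {S R : Finset α}
    (hcard : S.card = R.card) :
    (permsCarrying S R).card * (Fintype.card α).choose R.card =
      Fintype.card (Equiv.Perm α) := by
  have hmaps : Set.MapsTo (fun π : Equiv.Perm α => R.map π.symm.toEmbedding)
      (univ : Finset (Equiv.Perm α)) ((univ : Finset α).powersetCard R.card) :=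
    fun π _ => mem_coe.mpr (mem_powersetCard.mpr ⟨subset_univ _, card_map _⟩)
  rw [← card_univ (α := Equiv.Perm α), card_eq_sum_card_fiberwise hmaps, ← card_univ (α := α),
    ← card_powersetCard, mul_comm, ← smul_eq_mul, ← sum_const]
  refine sum_congr rfl fun S' hS' => ?_
  rw [card_permsCarrying_congr (hcard.trans (mem_powersetCard.mp hS').2.symm)]
  congr 1
  ext π
  simp [mem_permsCarrying_iff_map_symm_eq]

end PairStat

/-- The excess of the total number of mixed pairs of the covering sets of `T` slots over its value
for as many arbitrary sets of `T` slots. -/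
def mixedExcess (m k T : ℕ) : ℝ :=
  ∑ S ∈ coveringSets m k T, (mixedPairs S : ℝ) -
    (k - 1) * T * (m * k - T) / (m * k - 1) * (coveringSets m k T).card

/-- The probability that a uniformly random set of `T` slots covers all clauses. -/
def coverProb (m k T : ℕ) : ℝ := (coveringSets m k T).card / (m * k).choose T

section Drift

variable {m k T : ℕ} {y : Slot m k → ℝ} {R : Finset (Slot m k)}

theorem le_mixedExcess (hk : 2 ≤ k) (hm : 2 ≤ m) (hT : 4 * T ≤ (2 * k + 1) * m) :
    critFreq k * (m - 1) / k * (coveringSets m k T).card ≤ mixedExcess m k T := by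
  have hk' : (2 : ℝ) ≤ k := by exact_mod_cast hk
  have hm' : (2 : ℝ) ≤ m := by exact_mod_cast hm
  have hM : (0 : ℝ) < m * k - 1 := by nlinarith
  have hnonneg : 0 ≤ critFreq k * (m - 1) * (coveringSets m k T).card :=
    mul_nonneg (mul_nonneg (critFreq_pos k).le (by linarith)) (Nat.cast_nonneg _)
  calc critFreq k * (m - 1) / k * (coveringSets m k T).card
      ≤ critFreq k * (m * (m - 1)) * (coveringSets m k T).card / (m * k - 1) := by
        rw [div_mul_eq_mul_div, div_le_div_iff₀ (by linarith) hM]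
        nlinarith
    _ ≤ mixedExcess m k T := by
        rw [div_le_iff₀ hM, mixedExcess, sub_mul, div_mul_eq_mul_div, div_mul_cancel₀ _ hM.ne']
        linarith [sum_mixedPairs_ge hk hT]

theorem mixedExcess_le (hk : 1 ≤ k) (hm : 1 ≤ m) (hT : T ≤ m * k) :
    mixedExcess m k T ≤ k * (m * k) * (coveringSets m k T).card := by
  have hk' : (1 : ℝ) ≤ k := by exact_mod_cast hk
  have hm' : (1 : ℝ) ≤ m := by exact_mod_cast hm
  have hT' : (T : ℝ) ≤ m * k := by exact_mod_cast hT
  have hsum : ∑ S ∈ coveringSets m k T, (mixedPairs S : ℝ) ≤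
      k * (m * k) * (coveringSets m k T).card := by
    rw [mul_comm, ← nsmul_eq_mul]
    exact sum_le_card_nsmul _ _ _ fun S _ => mixedPairs_le S
  have hnonneg : 0 ≤ ((k : ℝ) - 1) * T * (m * k - T) / (m * k - 1) * (coveringSets m k T).card :=
    mul_nonneg (div_nonneg (mul_nonneg (mul_nonneg (by linarith) (Nat.cast_nonneg _))
      (by linarith)) (by nlinarith)) (Nat.cast_nonneg _)
  rw [mixedExcess]
  linarith

theorem card_coveringPerms (R : Finset (Slot m k)) :
    (coveringPerms R).card = (permsCarrying R R).card * (coveringSets m k R.card).card := by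
  rw [card_eq_sum_ones, sum_coveringPerms, mul_comm, ← smul_eq_mul, ← sum_const]
  refine sum_congr rfl fun S hS => ?_
  rw [← card_eq_sum_ones, card_permsCarrying_congr (mem_coveringSets.mp hS).1]

theorem card_coveringPerms_div (R : Finset (Slot m k)) :
    ((coveringPerms R).card : ℝ) / Fintype.card (Equiv.Perm (Slot m k)) =
      coverProb m k R.card := by
  have hperm := card_permsCarrying_mul_choose (S := R) rfl
  have hR : R.card ≤ m * k := by simpa using card_le_univ R
  have hchoose : ((m * k).choose R.card : ℝ) ≠ 0 :=
    Nat.cast_ne_zero.mpr (Nat.choose_pos hR).ne'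
  simp only [Fintype.card_prod, Fintype.card_fin] at hperm
  rw [coverProb, div_eq_div_iff (by positivity) hchoose, card_coveringPerms, ← hperm]
  push_cast
  ring

theorem sum_coveringPerms_pairStat_sub (y : Slot m k → ℝ) (hR : 2 ≤ R.card) (hRc : 2 ≤ Rᶜ.card) :
    ∑ π ∈ coveringPerms R,
        (pairStat (y ∘ π) - 𝔼 ρ : Equiv.Perm (Slot m k), pairStat (y ∘ ρ)) =
      -((permsCarrying R R).card * mixedExcess m k R.card *
        (pairMean y R + pairMean y Rᶜ - 2 * (meanOn y R * meanOn y Rᶜ))) := by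
  have hcard : (m : ℝ) * k = R.card + Rᶜ.card := by
    have := card_add_card_compl R
    simp only [Fintype.card_prod, Fintype.card_fin] at this
    exact_mod_cast this.symm
  have hR' : (2 : ℝ) ≤ R.card := by exact_mod_cast hR
  have hM : (m : ℝ) * k - 1 ≠ 0 := by
    have : (0 : ℝ) ≤ Rᶜ.card := Nat.cast_nonneg _
    linarith
  have hmean := card_mul_pairMean_univ y hR hRc
  simp only [Fintype.card_prod, Fintype.card_fin, Nat.cast_mul] at hmean
  have hcarry : ∀ S ∈ coveringSets m k R.card, ∑ π ∈ permsCarrying S R,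
      (pairStat (y ∘ π) - (k - 1) * (m * k * pairMean y univ)) = (permsCarrying R R).card *
        ((k - 1) * (R.card * pairMean y R + Rᶜ.card * pairMean y Rᶜ) - mixedPairs S *
          (pairMean y R + pairMean y Rᶜ - 2 * (meanOn y R * meanOn y Rᶜ)) -
          (k - 1) * (m * k * pairMean y univ)) := fun S hS => by
    have hS' := (mem_coveringSets.mp hS).1
    rw [sum_sub_distrib, sum_permsCarrying_pairStat hS', sum_const, nsmul_eq_mul,
      card_permsCarrying_congr hS', ← mul_sub]
  rw [sum_coveringPerms, expect_pairStat, mul_assoc _ _ (pairMean y univ), sum_congr rfl hcarry,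
    ← mul_sum, sum_sub_distrib, sum_sub_distrib, ← sum_mul _ (fun S => (mixedPairs S : ℝ)),
    sum_const, sum_const, nsmul_eq_mul, nsmul_eq_mul, mixedExcess, hmean]
  generalize ∑ S ∈ coveringSets m k R.card, (mixedPairs S : ℝ) = I
  rw [hcard] at hM ⊢
  rw [add_sub_cancel_left]
  field_simp
  ring

theorem sum_coveringPerms_pairStat_sub_le (hk : 2 ≤ k) (hm : 2 ≤ m)
    (hy : ∀ p, |y p| ≤ 1) (hR : 2 ≤ R.card) (hRc : 2 ≤ Rᶜ.card)
    (hT : 4 * R.card ≤ (2 * k + 1) * m) :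
    ∑ π ∈ coveringPerms R,
        (pairStat (y ∘ π) - 𝔼 ρ : Equiv.Perm (Slot m k), pairStat (y ∘ ρ)) ≤
      (coveringPerms R).card * (-(critFreq k * (m - 1) / k) * (meanOn y R - meanOn y Rᶜ) ^ 2 +
        k * (m * k) * (1 / (R.card - 1) + 1 / (Rᶜ.card - 1))) := by
  rw [sum_coveringPerms_pairStat_sub y hR hRc, card_coveringPerms, Nat.cast_mul, mul_assoc,
    mul_assoc, ← mul_neg]
  refine mul_le_mul_of_nonneg_left ?_ (Nat.cast_nonneg _)
  have hR' : (2 : ℝ) ≤ R.card := by exact_mod_cast hR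
  have hRc' : (2 : ℝ) ≤ Rᶜ.card := by exact_mod_cast hRc
  have hlower := le_mixedExcess hk hm hT
  have hupper : mixedExcess m k R.card ≤ _ :=
    mixedExcess_le (by omega) (by omega) (by simpa using card_le_univ R)
  have hgap := sq_meanOn_sub_le_pairMean hy hR
  have hgap' := sq_meanOn_sub_le_pairMean hy hRc
  set N : ℝ := ((coveringSets m k R.card).card : ℝ)
  set X := mixedExcess m k R.card
  set s := (meanOn y R - meanOn y Rᶜ) ^ 2 with hs
  set ε : ℝ := 1 / ((R.card : ℝ) - 1) + 1 / ((Rᶜ.card : ℝ) - 1)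
  have hε : 0 ≤ ε :=
    add_nonneg (one_div_nonneg.mpr (by linarith)) (one_div_nonneg.mpr (by linarith))
  have hX : 0 ≤ X := by
    have : (0 : ℝ) ≤ m - 1 := sub_nonneg.mpr (by exact_mod_cast (by omega : 1 ≤ m))
    exact le_trans (by have := critFreq_pos k; positivity) hlower
  calc -(X * (pairMean y R + pairMean y Rᶜ - 2 * (meanOn y R * meanOn y Rᶜ)))
      ≤ -(X * (s - ε)) := neg_le_neg (mul_le_mul_of_nonneg_left (by linarith) hX)
    _ = -(X * s) + X * ε := by ring
    _ ≤ -(critFreq k * (m - 1) / k * N * s) + k * (m * k) * N * ε := by gcongr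
    _ = N * (-(critFreq k * (m - 1) / k) * s + k * (m * k) * ε) := by ring

end Drift

/-! ### Satisfied occurrences prefer the majority sign -/

section CoverProb

variable {m k T T' : ℕ}

theorem coverProb_nonneg (m k T : ℕ) : 0 ≤ coverProb m k T := by
  unfold coverProb
  positivity

theorem critFreq_div_pos (hk : 0 < k) : 0 < critFreq k / k :=
  div_pos (critFreq_pos k) (Nat.cast_pos.mpr hk)

theorem coverProb_le_succ (hk : 2 ≤ k) (hm : 2 ≤ m) (hT : 4 * (T + 1) ≤ (2 * k + 1) * m) :
    coverProb m k T ≤ (1 - critFreq k / k) * coverProb m k (T + 1) := by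
  have hTM : T + 1 ≤ m * k := by nlinarith
  have hTM' : (T : ℝ) + 1 ≤ m * k := by exact_mod_cast hTM
  have hk0 : (0 : ℝ) < k := by exact_mod_cast (by omega : 0 < k)
  have hchoose : ((m * k).choose (T + 1) : ℝ) * (T + 1) = (m * k).choose T * (m * k - T) := by
    rw [← Nat.cast_mul m k, ← Nat.cast_sub (by omega)]
    exact_mod_cast Nat.choose_succ_right_eq (m * k) T
  have hfreq : critFreq k / k * (T + 1) ≤ critFreq k * m := by
    rw [div_mul_eq_mul_div, div_le_iff₀ hk0, mul_assoc]
    exact mul_le_mul_of_nonneg_left hTM' (critFreq_pos k).le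
  have hcount : (m * k - T) * ((coveringSets m k T).card : ℝ) ≤
      (1 - critFreq k / k) * (T + 1) * (coveringSets m k (T + 1)).card := by
    linarith [card_coveringSets_succ_ge hk hm hT,
      mul_le_mul_of_nonneg_right hfreq (Nat.cast_nonneg (coveringSets m k (T + 1)).card)]
  rw [coverProb, coverProb, mul_div_assoc',
    div_le_div_iff₀ (Nat.cast_pos.mpr (Nat.choose_pos (by omega)))
      (Nat.cast_pos.mpr (Nat.choose_pos hTM))]
  refine le_of_mul_le_mul_left ?_ (by linarith : (0 : ℝ) < m * k - T)
  calc (m * k - T) * (((coveringSets m k T).card : ℝ) * (m * k).choose (T + 1))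
      = (m * k - T) * ((coveringSets m k T).card : ℝ) * (m * k).choose (T + 1) := by ring
    _ ≤ (1 - critFreq k / k) * (T + 1) * (coveringSets m k (T + 1)).card *
          (m * k).choose (T + 1) := by gcongr
    _ = (1 - critFreq k / k) * (coveringSets m k (T + 1)).card *
          ((m * k).choose (T + 1) * (T + 1)) := by ring
    _ = _ := by rw [hchoose]; ring

theorem coverProb_le_of_lt (hk : 2 ≤ k) (hm : 2 ≤ m) (h : T < T')
    (hT' : 4 * T' ≤ (2 * k + 1) * m) :
    coverProb m k T ≤ (1 - critFreq k / k) * coverProb m k T' := by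
  induction T', Nat.succ_le_of_lt h using Nat.le_induction with
  | base => exact coverProb_le_succ hk hm hT'
  | succ T' hTT' ih =>
    have hstep := coverProb_le_succ hk hm hT'
    have hfreq := critFreq_div_pos (k := k) (by omega)
    have hnonneg := mul_nonneg hfreq.le (coverProb_nonneg m k (T' + 1))
    linarith [ih (by omega) (by omega), mul_nonneg hfreq.le (coverProb_nonneg m k T')]

theorem coverProb_sub_mul_sub_ge (hk : 2 ≤ k) (hm : 2 ≤ m) (hne : T ≠ T')
    (hT : 4 * T ≤ (2 * k + 1) * m) (hT' : 4 * T' ≤ (2 * k + 1) * m) :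
    critFreq k / k / 2 * (coverProb m k T + coverProb m k T') ≤
      (coverProb m k T - coverProb m k T') * (T - T') := by
  wlog h : T' < T generalizing T T'
  · linarith [this hne.symm hT' hT (by omega)]
  have hlt := coverProb_le_of_lt hk hm h hT
  have hfreq := critFreq_div_pos (k := k) (by omega)
  have hprod := mul_nonneg hfreq.le (coverProb_nonneg m k T)
  have hgap : (1 : ℝ) ≤ T - T' := by
    rw [le_sub_iff_add_le, add_comm]
    exact_mod_cast h
  calc critFreq k / k / 2 * (coverProb m k T + coverProb m k T')
      ≤ critFreq k / k * coverProb m k T := by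
        have : coverProb m k T' ≤ coverProb m k T := by linarith
        nlinarith
    _ ≤ (coverProb m k T - coverProb m k T') * 1 := by linarith
    _ ≤ (coverProb m k T - coverProb m k T') * (T - T') :=
        mul_le_mul_of_nonneg_left hgap (by linarith)

end CoverProb

/-- The number of literal occurrences satisfied by `σ` in a formula with degree sequence `d`. -/
def trueCount {n : ℕ} (d : Lit n → ℕ) (σ : Assignment n) : ℕ := ∑ x, d (x, σ x)

/-- By how much the satisfied occurrences of the variable `x` outnumber the falsified ones. -/
def margin {n : ℕ} (d : Lit n → ℕ) (σ : Assignment n) (x : Fin n) : ℝ := d (x, σ x) - d (x, !σ x)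

/-- The variables that do not occur equally often with either sign. -/
def unbalancedVars {n : ℕ} (d : Lit n → ℕ) : Finset (Fin n) :=
  univ.filter fun x => d (x, true) ≠ d (x, false)

/-- The assignment obtained from `σ` by flipping the value of the variable `x`. -/
def flipAt {n : ℕ} (x : Fin n) (σ : Assignment n) : Assignment n := Function.update σ x (!σ x)

section Margin

variable {n m k : ℕ} {d : Lit n → ℕ} {σ : Assignment n} {x : Fin n}

theorem flipAt_involutive (x : Fin n) : Function.Involutive (flipAt x) := fun σ => by
  simp [flipAt]

theorem margin_flipAt (d : Lit n → ℕ) (σ : Assignment n) (x : Fin n) :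
    margin d (flipAt x σ) x = -margin d σ x := by
  simp [margin, flipAt]

theorem trueCount_sub_trueCount_flipAt (d : Lit n → ℕ) (σ : Assignment n) (x : Fin n) :
    (trueCount d σ : ℝ) - trueCount d (flipAt x σ) = margin d σ x := by
  unfold trueCount margin
  push_cast
  rw [← sum_sub_distrib, sum_eq_single x (fun y _ hy => by simp [flipAt, hy]) (by simp)]
  simp [flipAt]

theorem margin_eq_zero_iff : margin d σ x = 0 ↔ d (x, true) = d (x, false) := by
  rw [margin, sub_eq_zero, Nat.cast_inj]
  cases σ x
  · exact eq_comm
  · rfl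

theorem sum_coverProb_mul_margin_ge (hk : 2 ≤ k) (hm : 2 ≤ m)
    (hd : ∀ σ, 4 * trueCount d σ ≤ (2 * k + 1) * m) (hx : d (x, true) ≠ d (x, false)) :
    critFreq k / k / 2 * ∑ σ, coverProb m k (trueCount d σ) ≤
      ∑ σ, coverProb m k (trueCount d σ) * margin d σ x := by
  have hflip : ∀ g : Assignment n → ℝ, ∑ σ, g (flipAt x σ) = ∑ σ, g σ :=
    Equiv.sum_comp (flipAt_involutive x).toPerm
  have hpoint : ∀ σ, critFreq k / k / 2 *
        (coverProb m k (trueCount d σ) + coverProb m k (trueCount d (flipAt x σ))) ≤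
      coverProb m k (trueCount d σ) * margin d σ x +
        coverProb m k (trueCount d (flipAt x σ)) * margin d (flipAt x σ) x := fun σ => by
    have hsub := trueCount_sub_trueCount_flipAt d σ x
    have hne : trueCount d σ ≠ trueCount d (flipAt x σ) := fun h =>
      hx (margin_eq_zero_iff.mp (by rw [← hsub, h, sub_self]))
    rw [margin_flipAt, ← hsub]
    linarith [coverProb_sub_mul_sub_ge hk hm hne (hd _) (hd _)]
  have hsum := sum_le_sum fun σ (_ : σ ∈ univ) => hpoint σ
  rw [← mul_sum, sum_add_distrib, sum_add_distrib,
    hflip fun σ => coverProb m k (trueCount d σ),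
    hflip fun σ => coverProb m k (trueCount d σ) * margin d σ x] at hsum
  linarith

theorem sum_coverProb_mul_sum_margin_ge (hk : 2 ≤ k) (hm : 2 ≤ m)
    (hd : ∀ σ, 4 * trueCount d σ ≤ (2 * k + 1) * m) :
    critFreq k / k / 2 * (unbalancedVars d).card *
        ∑ σ, coverProb m k (trueCount d σ) ≤
      ∑ σ, coverProb m k (trueCount d σ) * ∑ x, margin d σ x := by
  simp only [mul_sum (univ : Finset (Fin n))]
  rw [sum_comm, mul_right_comm, mul_comm, ← nsmul_eq_mul, ← sum_const, unbalancedVars, sum_filter]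
  refine sum_le_sum fun x _ => ?_
  split_ifs with hx
  · exact sum_coverProb_mul_margin_ge hk hm hd hx
  · exact (sum_eq_zero fun σ _ => by
      rw [margin_eq_zero_iff.mpr (not_not.mp hx), mul_zero]).ge

theorem sum_coverProb_mul_sq_sum_margin_ge (hk : 2 ≤ k) (hm : 2 ≤ m)
    (hd : ∀ σ, 4 * trueCount d σ ≤ (2 * k + 1) * m) :
    (critFreq k / k / 2 * (unbalancedVars d).card) ^ 2 *
        ∑ σ, coverProb m k (trueCount d σ) ≤
      ∑ σ, coverProb m k (trueCount d σ) * (∑ x, margin d σ x) ^ 2 := by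
  have hlinear := sum_coverProb_mul_sum_margin_ge hk hm hd
  set c := critFreq k / k / 2 * ((unbalancedVars d).card : ℝ)
  have hc : 0 ≤ c := mul_nonneg (half_pos (critFreq_div_pos (by omega))).le (Nat.cast_nonneg _)
  calc c ^ 2 * ∑ σ, coverProb m k (trueCount d σ)
      ≤ 2 * c * ∑ σ, coverProb m k (trueCount d σ) * ∑ x, margin d σ x -
          c ^ 2 * ∑ σ, coverProb m k (trueCount d σ) := by nlinarith
    _ = ∑ σ, coverProb m k (trueCount d σ) * (2 * c * ∑ x, margin d σ x - c ^ 2) := by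
        rw [mul_sum, mul_sum, ← sum_sub_distrib]
        exact sum_congr rfl fun σ _ => by ring
    _ ≤ ∑ σ, coverProb m k (trueCount d σ) * (∑ x, margin d σ x) ^ 2 := by
        refine sum_le_sum fun σ _ => mul_le_mul_of_nonneg_left ?_ (coverProb_nonneg _ _ _)
        linarith [sq_nonneg (∑ x, margin d σ x - c)]

end Margin

/-- The relative bias `(d_l - d_¬l) / (d_l + d_¬l)` of the literal `l`. It is `0` for a variable
that does not occur, by the convention `0 / 0 = 0`. -/
def relBias {n : ℕ} (d : Lit n → ℕ) (l : Lit n) : ℝ :=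
  ((d l : ℝ) - d (l.1, !l.2)) / (d l + d (l.1, !l.2))

/-- The sum of the relative biases of all literal occurrences of a formula with degree
sequence `d`. -/
def totalBias {n : ℕ} (d : Lit n → ℕ) : ℝ := ∑ l, d l * relBias d l

section RelBias

variable {n : ℕ} (d : Lit n → ℕ)

theorem abs_relBias_le_one (l : Lit n) : |relBias d l| ≤ 1 := by
  rw [relBias, abs_div]
  refine div_le_one_of_le₀ (abs_sub_le_of_nonneg_of_le (Nat.cast_nonneg _) ?_ (Nat.cast_nonneg _) ?_
    |>.trans (le_abs_self _)) (abs_nonneg _) <;> simp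

theorem relBias_not (x : Fin n) (b : Bool) : relBias d (x, !b) = -relBias d (x, b) := by
  simp only [relBias, Bool.not_not]
  rw [← neg_div, neg_sub, add_comm]

theorem mul_relBias_add (x : Fin n) (b : Bool) :
    d (x, b) * relBias d (x, b) + d (x, !b) * relBias d (x, !b) =
      (d (x, b) - d (x, !b)) * relBias d (x, b) := by
  rw [relBias_not]
  ring

theorem mul_relBias_sub (x : Fin n) (b : Bool) :
    d (x, b) * relBias d (x, b) - d (x, !b) * relBias d (x, !b) = d (x, b) - d (x, !b) := by
  rw [relBias_not, mul_neg, sub_neg_eq_add, ← add_mul, relBias]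
  refine mul_div_cancel_of_imp' fun h => ?_
  have : d (x, b) = 0 ∧ d (x, !b) = 0 := by
    have : d (x, b) + d (x, !b) = 0 := by exact_mod_cast h
    omega
  simp [this]

theorem totalBias_eq_sum (σ : Assignment n) :
    totalBias d = ∑ x, (d (x, σ x) * relBias d (x, σ x) + d (x, !σ x) * relBias d (x, !σ x)) := by
  rw [totalBias, Fintype.sum_prod_type]
  refine sum_congr rfl fun x _ => ?_
  cases σ x <;> simp [add_comm]

theorem sum_mul_relBias (σ : Assignment n) :
    ∑ x, d (x, σ x) * relBias d (x, σ x) = (∑ x, margin d σ x + totalBias d) / 2 := by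
  rw [totalBias_eq_sum d σ, ← sum_add_distrib, sum_div]
  refine sum_congr rfl fun x _ => ?_
  rw [margin, ← mul_relBias_sub]
  ring

theorem totalBias_le_sum_abs (σ : Assignment n) : totalBias d ≤ ∑ x, |margin d σ x| := by
  rw [totalBias_eq_sum d σ]
  refine sum_le_sum fun x _ => ?_
  rw [mul_relBias_add, ← margin]
  calc margin d σ x * relBias d (x, σ x) ≤ |margin d σ x| * |relBias d (x, σ x)| := by
        rw [← abs_mul]
        exact le_abs_self _
    _ ≤ |margin d σ x| := mul_le_of_le_one_right (abs_nonneg _) (abs_relBias_le_one d _)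

theorem sum_margin (σ : Assignment n) :
    ∑ x, margin d σ x = trueCount d σ - trueCount d fun x => !σ x := by
  simp only [margin, trueCount, Nat.cast_sum, sum_sub_distrib]

end RelBias

/-- If parts of sizes `T` and `F` of a weight vector of total `W` carry the totals `(D ± W) / 2`,
where `D = T - F`, then the means on the two parts differ by at least a share of `D`. -/
theorem sq_div_sq_le_sq_sub_div {T F W : ℝ} (hT : 0 < T) (hF : 0 < F)
    (hW : 2 * W ≤ T + F) :
    (T - F) ^ 2 / (T + F) ^ 2 ≤ ((T - F + W) / 2 / T - (F - T + W) / 2 / F) ^ 2 := by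
  have hmeans : (T - F + W) / 2 / T - (F - T + W) / 2 / F =
      (T - F) / (T + F) * ((T + F) * (T + F - W) / (2 * (T * F))) := by
    field_simp
    ring
  rw [hmeans, mul_pow, div_pow]
  refine le_mul_of_one_le_right (by positivity) (one_le_pow₀ ((one_le_div (by positivity)).mpr ?_))
  nlinarith [sq_nonneg (T - F)]

/-! ### Random formulas with a given degree sequence -/

/-- The slots of `Φ` that hold a literal which is true under `σ`. -/
def trueSlots {n k m : ℕ} (σ : Assignment n) (Φ : Formula n k m) : Finset (Slot m k) :=
  univ.filter fun p => litVal σ (Φ p.1 p.2) = true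

/-- The formula whose slot `p` holds the literal in slot `π p` of `Φ`. Over a uniformly random `π`
this is a uniformly random formula with the degree sequence of `Φ`. -/
def permute {n k m : ℕ} (π : Equiv.Perm (Slot m k)) (Φ : Formula n k m) : Formula n k m :=
  fun i j => Φ (π (i, j)).1 (π (i, j)).2

/-- The relative bias of the literal in each slot of `Φ`. -/
def slotBias {n k m : ℕ} (Φ : Formula n k m) (p : Slot m k) : ℝ :=
  relBias (degSeq n k m Φ) (Φ p.1 p.2)

section TrueSlots

variable {n k m : ℕ}

theorem litVal_eq_true_iff {σ : Assignment n} {l : Lit n} : litVal σ l = true ↔ l.2 = σ l.1 := by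
  obtain ⟨x, b⟩ := l
  cases b <;> cases h : σ x <;> simp [litVal, h]

theorem satisfies_iff_covers {σ : Assignment n} {Φ : Formula n k m} :
    Satisfies σ Φ ↔ Covers (trueSlots σ Φ) := by
  simp [Satisfies, Covers, trueSlots]

theorem trueSlots_not (σ : Assignment n) (Φ : Formula n k m) :
    trueSlots (fun x => !σ x) Φ = (trueSlots σ Φ)ᶜ := by
  ext p
  simp only [trueSlots, mem_compl, mem_filter, mem_univ, true_and, litVal_eq_true_iff]
  exact Bool.eq_not

theorem trueSlots_permute (σ : Assignment n) (π : Equiv.Perm (Slot m k)) (Φ : Formula n k m) :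
    trueSlots σ (permute π Φ) = (trueSlots σ Φ).map π.symm.toEmbedding := by
  ext p
  simp [trueSlots, permute, mem_map_equiv]

theorem satCount_permute (π : Equiv.Perm (Slot m k)) (Φ : Formula n k m) :
    (satCount n k m (permute π Φ) : ℝ) =
      ∑ σ, if π ∈ coveringPerms (trueSlots σ Φ) then 1 else 0 := by
  simp only [satCount, satSet, card_filter, Nat.cast_sum, Nat.cast_ite, Nat.cast_one,
    Nat.cast_zero, coveringPerms, mem_filter_univ, ← trueSlots_permute, ← satisfies_iff_covers]

theorem expect_satCount_permute_mul (Φ : Formula n k m) (u : Equiv.Perm (Slot m k) → ℝ) :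
    𝔼 π, (satCount n k m (permute π Φ) : ℝ) * u π =
      ∑ σ, (∑ π ∈ coveringPerms (trueSlots σ Φ), u π) /
        Fintype.card (Equiv.Perm (Slot m k)) := by
  simp only [expect_eq_sum_div_card, satCount_permute, sum_mul, ite_mul, one_mul, zero_mul,
    ← sum_div, card_univ]
  rw [sum_comm]
  simp only [sum_ite_mem, univ_inter]

theorem sum_slots_eq_sum_degSeq_mul (Φ : Formula n k m) (g : Lit n → ℝ) :
    ∑ p : Slot m k, g (Φ p.1 p.2) = ∑ l, degSeq n k m Φ l * g l := by
  rw [← sum_fiberwise univ fun p : Slot m k => Φ p.1 p.2]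
  refine sum_congr rfl fun l _ => ?_
  rw [sum_congr rfl fun p hp => by rw [(mem_filter.mp hp).2], sum_const, nsmul_eq_mul]
  rfl

theorem sum_trueSlots (σ : Assignment n) (Φ : Formula n k m) (g : Lit n → ℝ) :
    ∑ p ∈ trueSlots σ Φ, g (Φ p.1 p.2) = ∑ x, degSeq n k m Φ (x, σ x) * g (x, σ x) := by
  rw [trueSlots, sum_filter,
    sum_slots_eq_sum_degSeq_mul Φ fun l => if litVal σ l = true then g l else 0,
    Fintype.sum_prod_type]
  refine sum_congr rfl fun x _ => ?_
  simp only [litVal_eq_true_iff, mul_ite, mul_zero, sum_ite_eq', mem_univ, if_true]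

theorem card_trueSlots (σ : Assignment n) (Φ : Formula n k m) :
    (trueSlots σ Φ).card = trueCount (degSeq n k m Φ) σ := by
  have := sum_trueSlots σ Φ fun _ => 1
  simp only [sum_const, nsmul_eq_mul, mul_one] at this
  exact_mod_cast this

theorem trueCount_degSeq_add_not (Φ : Formula n k m) (σ : Assignment n) :
    trueCount (degSeq n k m Φ) σ + trueCount (degSeq n k m Φ) (fun x => !σ x) = m * k := by
  rw [← card_trueSlots, ← card_trueSlots, trueSlots_not, card_add_card_compl, Fintype.card_prod,
    Fintype.card_fin, Fintype.card_fin]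

theorem meanOn_slotBias_trueSlots (Φ : Formula n k m) (σ : Assignment n) :
    meanOn (slotBias Φ) (trueSlots σ Φ) =
      (trueCount (degSeq n k m Φ) σ - trueCount (degSeq n k m Φ) (fun x => !σ x) +
        totalBias (degSeq n k m Φ)) / 2 / trueCount (degSeq n k m Φ) σ := by
  simp only [meanOn, slotBias]
  rw [card_trueSlots, sum_trueSlots σ Φ, sum_mul_relBias, sum_margin]

theorem margin_sigmaMaj (Φ : Formula n k m) (x : Fin n) :
    margin (degSeq n k m Φ) (sigmaMaj n k m Φ) x =
      |margin (degSeq n k m Φ) (sigmaMaj n k m Φ) x| := by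
  refine (abs_of_nonneg (sub_nonneg.mpr (Nat.cast_le.mpr ?_))).symm
  rcases lt_or_ge (occ n k m Φ (x, false)) (occ n k m Φ (x, true)) with h | h
  · simpa [sigmaMaj, degSeq, h] using h.le
  · simpa [sigmaMaj, degSeq, h.not_gt] using h

end TrueSlots

section DegreeClass

theorem exists_perm_comp_eq {α β : Type*} [Fintype α] [DecidableEq β] {f g : α → β}
    (h : ∀ b, (univ.filter fun a => f a = b).card = (univ.filter fun a => g a = b).card) :
    ∃ π : Equiv.Perm α, g ∘ π = f := by
  have hfiber (b : β) : Nonempty ({a // f a = b} ≃ {a // g a = b}) :=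
    ⟨Fintype.equivOfCardEq (by simpa only [Fintype.card_subtype] using h b)⟩
  exact ⟨Equiv.ofFiberEquiv fun b => (hfiber b).some,
    funext fun a => Equiv.ofFiberEquiv_map (fun b => (hfiber b).some) a⟩

variable {n k m : ℕ}

theorem permute_one (Φ : Formula n k m) : permute 1 Φ = Φ := rfl

theorem permute_mul (π ρ : Equiv.Perm (Slot m k)) (Φ : Formula n k m) :
    permute (π * ρ) Φ = permute ρ (permute π Φ) := rfl

theorem mem_degClass_degSeq_iff {Φ Ψ : Formula n k m} :
    Ψ ∈ degClass n k m (degSeq n k m Φ) ↔ ∃ π, permute π Φ = Ψ := by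
  rw [degClass, mem_filter_univ]
  constructor
  · intro h
    obtain ⟨π, hπ⟩ := exists_perm_comp_eq (f := fun p : Slot m k => Ψ p.1 p.2)
      (g := fun p : Slot m k => Φ p.1 p.2) fun l => congrFun h l
    exact ⟨π, funext₂ fun i j => congrFun hπ (i, j)⟩
  · rintro ⟨π, rfl⟩
    refine funext fun l => card_equiv π fun p => ?_
    simp [permute]

theorem card_permute_eq {Φ Ψ : Formula n k m} (hΨ : Ψ ∈ degClass n k m (degSeq n k m Φ)) :
    (univ.filter fun π => permute π Φ = Ψ).card = (univ.filter fun π => permute π Φ = Φ).card := by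
  obtain ⟨ρ, rfl⟩ := mem_degClass_degSeq_iff.mp hΨ
  refine card_equiv (Equiv.mulRight ρ⁻¹) fun π => ?_
  rw [mem_filter_univ, mem_filter_univ, Equiv.coe_mulRight, permute_mul]
  constructor
  · intro h
    rw [h, ← permute_mul, mul_inv_cancel, permute_one]
  · intro h
    conv_rhs => rw [← h]
    rw [← permute_mul, inv_mul_cancel, permute_one]

theorem condE_degSeq_eq_expect (Φ : Formula n k m) (φ : Formula n k m → ℝ) :
    condE n k m (degSeq n k m Φ) φ = 𝔼 π, φ (permute π Φ) := by
  have hsum (ψ : Formula n k m → ℝ) : ∑ π, ψ (permute π Φ) =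
      (univ.filter fun π => permute π Φ = Φ).card * ∑ Ψ ∈ degClass n k m (degSeq n k m Φ), ψ Ψ := by
    rw [← sum_fiberwise_of_maps_to (g := fun π => permute π Φ)
      fun π _ => mem_degClass_degSeq_iff.mpr ⟨π, rfl⟩, mul_sum]
    refine sum_congr rfl fun Ψ hΨ => ?_
    rw [sum_congr rfl fun π hπ => by rw [(mem_filter.mp hπ).2], sum_const, nsmul_eq_mul,
      card_permute_eq hΨ]
  have hcard := hsum fun _ => 1
  simp only [sum_const, nsmul_eq_mul, mul_one] at hcard
  have hstab : ((univ.filter fun π => permute π Φ = Φ).card : ℝ) ≠ 0 :=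
    Nat.cast_ne_zero.mpr (card_pos.mpr ⟨1, by simp [permute_one]⟩).ne'
  rw [condE, expect_eq_sum_div_card, hsum, hcard, mul_div_mul_left _ _ hstab]

end DegreeClass

/-- No assignment satisfies more than the fraction `1/2 + 1/(4k)` of the literal occurrences
of `Φ`. -/
def IsBalanced {n k m : ℕ} (Φ : Formula n k m) : Prop :=
  ∀ σ, 4 * trueCount (degSeq n k m Φ) σ ≤ (2 * k + 1) * m

/-- The rate at which `pairStat` of the slot biases is shifted downwards, in formulas weighted by
their number of satisfying assignments, if an eighth of the variables are unbalanced. -/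
def driftRate (n k m : ℕ) : ℝ :=
  critFreq k * (m - 1) / k * (critFreq k / k / 2 * (n / 8) / (m * k)) ^ 2 - 16 * k

section SecondMoment

variable {n k m : ℕ} {Φ : Formula n k m}

theorem IsBalanced.totalBias_le (h : IsBalanced Φ) : totalBias (degSeq n k m Φ) ≤ m / 2 := by
  have hsum := totalBias_le_sum_abs (degSeq n k m Φ) (sigmaMaj n k m Φ)
  rw [← sum_congr rfl fun x _ => margin_sigmaMaj Φ x, sum_margin] at hsum
  have hadd : (trueCount (degSeq n k m Φ) (sigmaMaj n k m Φ) : ℝ) +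
      trueCount (degSeq n k m Φ) (fun x => !sigmaMaj n k m Φ x) = m * k := by
    exact_mod_cast trueCount_degSeq_add_not Φ (sigmaMaj n k m Φ)
  have hle : (4 : ℝ) * trueCount (degSeq n k m Φ) (sigmaMaj n k m Φ) ≤ (2 * k + 1) * m := by
    exact_mod_cast h (sigmaMaj n k m Φ)
  linarith

theorem IsBalanced.le_four_mul_trueCount (h : IsBalanced Φ) (hk : 2 ≤ k) (σ : Assignment n) :
    m * k ≤ 4 * trueCount (degSeq n k m Φ) σ := by
  have hadd := trueCount_degSeq_add_not Φ σ
  have hle := h fun x => !σ x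
  nlinarith

theorem IsBalanced.sq_sum_margin_div_le (h : IsBalanced Φ) (hk : 2 ≤ k) (hm : 0 < m)
    (σ : Assignment n) :
    ((∑ x, margin (degSeq n k m Φ) σ x) / (m * k)) ^ 2 ≤
      (meanOn (slotBias Φ) (trueSlots σ Φ) - meanOn (slotBias Φ) (trueSlots σ Φ)ᶜ) ^ 2 := by
  have hpos (τ : Assignment n) : (0 : ℝ) < trueCount (degSeq n k m Φ) τ := by
    have := h.le_four_mul_trueCount hk τ
    have := Nat.mul_pos hm (by omega : 0 < k)
    exact_mod_cast (by omega : 0 < trueCount (degSeq n k m Φ) τ)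
  have hadd : (trueCount (degSeq n k m Φ) σ : ℝ) + trueCount (degSeq n k m Φ) (fun x => !σ x) =
      m * k := by
    exact_mod_cast trueCount_degSeq_add_not Φ σ
  have hW : 2 * totalBias (degSeq n k m Φ) ≤ m * k := by
    have hk' : (2 : ℝ) ≤ k := by exact_mod_cast hk
    nlinarith [h.totalBias_le, (Nat.cast_nonneg m : (0 : ℝ) ≤ m)]
  rw [← trueSlots_not, meanOn_slotBias_trueSlots, meanOn_slotBias_trueSlots, sum_margin, ← hadd,
    div_pow]
  simp only [Bool.not_not]
  exact sq_div_sq_le_sq_sub_div (hpos σ) (hpos _) (hadd ▸ hW)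

theorem IsBalanced.two_le_card_trueSlots (h : IsBalanced Φ) (hk : 2 ≤ k) (hmk : 8 ≤ m * k)
    (σ : Assignment n) : 2 ≤ (trueSlots σ Φ).card := by
  have := h.le_four_mul_trueCount hk σ
  rw [card_trueSlots]
  omega

theorem IsBalanced.one_div_card_trueSlots_sub_one_le (h : IsBalanced Φ) (hk : 2 ≤ k)
    (hmk : 8 ≤ m * k) (σ : Assignment n) :
    1 / (((trueSlots σ Φ).card : ℝ) - 1) ≤ 8 / (m * k) := by
  have hmk' : (8 : ℝ) ≤ m * k := by exact_mod_cast hmk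
  have hle : (m * k : ℝ) ≤ 4 * (trueSlots σ Φ).card := by
    rw [card_trueSlots]
    exact_mod_cast h.le_four_mul_trueCount hk σ
  rw [div_le_div_iff₀ (by linarith) (by linarith)]
  linarith

theorem critFreq_mul_div_nonneg (k : ℕ) (hm : 1 ≤ m) : 0 ≤ critFreq k * (m - 1) / k :=
  div_nonneg (mul_nonneg (critFreq_pos k).le (sub_nonneg.mpr (by exact_mod_cast hm)))
    (Nat.cast_nonneg k)

theorem IsBalanced.sum_coveringPerms_div_le (h : IsBalanced Φ) (hk : 2 ≤ k) (hm : 2 ≤ m)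
    (hmk : 8 ≤ m * k) (σ : Assignment n) :
    (∑ π ∈ coveringPerms (trueSlots σ Φ), (pairStat (slotBias Φ ∘ π) -
        𝔼 ρ : Equiv.Perm (Slot m k), pairStat (slotBias Φ ∘ ρ))) /
        Fintype.card (Equiv.Perm (Slot m k)) ≤
      coverProb m k (trueCount (degSeq n k m Φ) σ) *
        (-(critFreq k * (m - 1) / k) * ((∑ x, margin (degSeq n k m Φ) σ x) / (m * k)) ^ 2 +
          16 * k) := by
  have hinv := h.one_div_card_trueSlots_sub_one_le hk hmk
  have htwo := h.two_le_card_trueSlots hk hmk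
  have hdrift := sum_coveringPerms_pairStat_sub_le hk hm
    (fun p => abs_relBias_le_one (degSeq n k m Φ) (Φ p.1 p.2)) (htwo σ)
    (by rw [← trueSlots_not]; exact htwo _) (by rw [card_trueSlots]; exact h σ)
  rw [← card_trueSlots, ← card_coveringPerms_div, div_mul_eq_mul_div]
  refine div_le_div_of_nonneg_right (hdrift.trans ?_) (Nat.cast_nonneg _)
  refine mul_le_mul_of_nonneg_left (add_le_add ?_ ?_) (Nat.cast_nonneg _)
  · rw [neg_mul, neg_mul, neg_le_neg_iff]
    exact mul_le_mul_of_nonneg_left (h.sq_sum_margin_div_le hk (by omega) σ)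
      (critFreq_mul_div_nonneg k (by omega))
  · have hmk' : (0 : ℝ) < m * k := by exact_mod_cast (by omega : 0 < m * k)
    rw [← trueSlots_not]
    calc (k : ℝ) * (m * k) * (1 / ((trueSlots σ Φ).card - 1) +
          1 / ((trueSlots (fun x => !σ x) Φ).card - 1))
        ≤ k * (m * k) * (8 / (m * k) + 8 / (m * k)) :=
          mul_le_mul_of_nonneg_left (add_le_add (hinv _) (hinv _)) (by positivity)
      _ = 16 * k := by
          rw [← add_div, mul_assoc, mul_div_cancel₀ _ hmk'.ne']
          ring

theorem expect_satCount_permute (Φ : Formula n k m) :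
    𝔼 π, (satCount n k m (permute π Φ) : ℝ) =
      ∑ σ, coverProb m k (trueCount (degSeq n k m Φ) σ) := by
  simpa only [mul_one, sum_const, nsmul_eq_mul, card_coveringPerms_div, card_trueSlots] using
    expect_satCount_permute_mul Φ fun _ => 1

theorem IsBalanced.expect_satCount_permute_mul_le (h : IsBalanced Φ) (hk : 2 ≤ k) (hm : 2 ≤ m)
    (hmk : 8 ≤ m * k) (hunbal : n ≤ 8 * (unbalancedVars (degSeq n k m Φ)).card) :
    𝔼 π, (satCount n k m (permute π Φ) : ℝ) * (pairStat (slotBias Φ ∘ π) -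
        𝔼 ρ : Equiv.Perm (Slot m k), pairStat (slotBias Φ ∘ ρ)) ≤
      -driftRate n k m * 𝔼 π, (satCount n k m (permute π Φ) : ℝ) := by
  set d := degSeq n k m Φ
  set P := ∑ σ, coverProb m k (trueCount d σ) with hP
  set g := critFreq k * (m - 1) / k with hg
  have hg0 : 0 ≤ g := critFreq_mul_div_nonneg k (by omega)
  have hP0 : 0 ≤ P := sum_nonneg fun σ _ => coverProb_nonneg _ _ _
  have hbias : (critFreq k / k / 2 * (n / 8)) ^ 2 * P ≤
      ∑ σ, coverProb m k (trueCount d σ) * (∑ x, margin d σ x) ^ 2 := by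
    refine le_trans ?_ (sum_coverProb_mul_sq_sum_margin_ge hk hm h)
    have hfreq := critFreq_div_pos (k := k) (by omega)
    have hn : (n / 8 : ℝ) ≤ (unbalancedVars d).card :=
      div_le_of_le_mul₀ (by norm_num) (Nat.cast_nonneg _) (by exact_mod_cast (by omega))
    gcongr
  calc _ = _ := expect_satCount_permute_mul Φ _
    _ ≤ ∑ σ, coverProb m k (trueCount d σ) *
        (-g * ((∑ x, margin d σ x) / (m * k)) ^ 2 + 16 * k) :=
      sum_le_sum fun σ _ => h.sum_coveringPerms_div_le hk hm hmk σ
    _ = -g / (m * k) ^ 2 * ∑ σ, coverProb m k (trueCount d σ) * (∑ x, margin d σ x) ^ 2 +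
        16 * k * P := by
      rw [hP, mul_sum, mul_sum, ← sum_add_distrib]
      exact sum_congr rfl fun σ _ => by ring
    _ ≤ -g / (m * k) ^ 2 * ((critFreq k / k / 2 * (n / 8)) ^ 2 * P) + 16 * k * P := by
      rw [neg_div, neg_mul, neg_mul]
      gcongr
    _ = -driftRate n k m * 𝔼 π, (satCount n k m (permute π Φ) : ℝ) := by
      rw [expect_satCount_permute, ← hP, driftRate, ← hg]
      ring

theorem IsBalanced.exp_mul_sq_condE_le (h : IsBalanced Φ) (hk : 2 ≤ k) (hm : 2 ≤ m)
    (hmk : 8 ≤ m * k) (hunbal : n ≤ 8 * (unbalancedVars (degSeq n k m Φ)).card)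
    {L : ℝ} (hL : 0 ≤ L) (hLdrift : L ≤ driftRate n k m) :
    Real.exp (L ^ 2 / (128 * k ^ 3 * m)) *
        condE n k m (degSeq n k m Φ) (fun Ψ => (satCount n k m Ψ : ℝ)) ^ 2 ≤
      condE n k m (degSeq n k m Φ) (fun Ψ => (satCount n k m Ψ : ℝ) ^ 2) := by
  have hk0 : 0 < k := by omega
  have hm0 : 0 < m := by omega
  rw [condE_degSeq_eq_expect, condE_degSeq_eq_expect,
    show (128 * k ^ 3 * m : ℝ) = 2 * ((8 * k) ^ 2 * (m * k)) by ring]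
  refine exp_mul_sq_expect_le (fun π => Nat.cast_nonneg _) (by positivity) hL (fun t => ?_)
    ((h.expect_satCount_permute_mul_le hk hm hmk hunbal).trans ?_)
  · refine (expect_exp_sub_expect_le (L := 8 * k) t fun π b c => ?_).trans_eq ?_
    · exact abs_pairStat_comp_swap_sub_le
        (fun p => abs_relBias_le_one _ (Φ (π p).1 (π p).2)) b c
    · simp only [Fintype.card_prod, Fintype.card_fin, Nat.cast_mul]
      ring_nf
  · exact mul_le_mul_of_nonneg_right (neg_le_neg hLdrift)
      (expect_nonneg fun π _ => Nat.cast_nonneg _)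

end SecondMoment

/-! ### Typical degree sequences -/

section Probability

variable {n k m : ℕ}

theorem prF_eq_expect (E : Formula n k m → Prop) : prF n k m E = 𝔼 Φ, if E Φ then 1 else 0 := by
  rw [prF, Fintype.expect_eq_sum_div_card, sum_boole]

theorem prF_le_one (E : Formula n k m → Prop) : prF n k m E ≤ 1 :=
  div_le_one_of_le₀ (by exact_mod_cast card_le_univ _) (Nat.cast_nonneg _)

theorem mul_prF_le_expect {E : Formula n k m → Prop} {f : Formula n k m → ℝ} {a : ℝ}
    (hf : ∀ Φ, 0 ≤ f Φ) (hE : ∀ Φ, E Φ → a ≤ f Φ) : a * prF n k m E ≤ 𝔼 Φ, f Φ := by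
  rw [prF_eq_expect, mul_expect]
  refine expect_le_expect fun Φ _ => ?_
  split_ifs with h
  · simpa only [mul_one] using hE Φ h
  · simpa only [mul_zero] using hf Φ

theorem prF_exists_le {ι : Type*} [Fintype ι] (E : ι → Formula n k m → Prop) :
    prF n k m (fun Φ => ∃ i, E i Φ) ≤ ∑ i, prF n k m (E i) := by
  simp only [prF_eq_expect]
  rw [← expect_sum_comm]
  refine expect_le_expect fun Φ _ => ?_
  have hnonneg (i : ι) : (0 : ℝ) ≤ if E i Φ then 1 else 0 := by split_ifs <;> norm_num
  split_ifs with h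
  · obtain ⟨i, hi⟩ := h
    simpa only [if_pos hi] using single_le_sum (fun j _ => hnonneg j) (mem_univ i)
  · exact sum_nonneg fun i _ => hnonneg i

theorem one_le_prF_add_prF_not_add_prF_not [NeZero n] {E A B : Formula n k m → Prop}
    (hE : ∀ Φ, A Φ → B Φ → E Φ) :
    1 ≤ prF n k m E + (prF n k m (fun Φ => ¬A Φ) + prF n k m fun Φ => ¬B Φ) := by
  simp only [prF_eq_expect]
  rw [← expect_add_distrib, ← expect_add_distrib, ← Fintype.expect_one (ι := Formula n k m)]
  refine expect_le_expect fun Φ _ => ?_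
  have := hE Φ
  by_cases hA : A Φ <;> by_cases hB : B Φ <;> by_cases h : E Φ <;> simp_all

theorem expect_prod_slots (g : Lit n → ℝ) :
    𝔼 Φ : Formula n k m, ∏ p : Slot m k, g (Φ p.1 p.2) = (𝔼 l, g l) ^ (m * k) := by
  simp only [Fintype.prod_prod_type]
  have hclause : 𝔼 c : Clause n k, ∏ j, g (c j) = (𝔼 l, g l) ^ k := by
    rw [expect_pow, Fintype.piFinset_univ]
  rw [mul_comm, pow_mul, ← hclause, expect_pow, Fintype.piFinset_univ]

end Probability

section Balanced

variable {n k m : ℕ}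

theorem expect_lit_exp_sign [NeZero n] (σ : Assignment n) (t : ℝ) :
    𝔼 l, Real.exp (t * if litVal σ l = true then 1 else -1) = Real.cosh t := by
  rw [Fintype.expect_eq_sum_div_card, Fintype.sum_prod_type]
  have hsum (x : Fin n) : ∑ b, Real.exp (t * if litVal σ (x, b) = true then 1 else -1) =
      2 * Real.cosh t := by
    rw [Fintype.sum_bool, Real.cosh_eq]
    cases h : σ x <;> simp [litVal, h] <;> ring
  rw [sum_congr rfl fun x _ => hsum x]
  simp [field]

theorem prod_slots_exp_sign (Φ : Formula n k m) (σ : Assignment n) (t : ℝ) :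
    ∏ p : Slot m k, Real.exp (t * if litVal σ (Φ p.1 p.2) = true then 1 else -1) =
      Real.exp (t * (2 * trueCount (degSeq n k m Φ) σ - m * k)) := by
  have hcount : ∑ p : Slot m k, (if litVal σ (Φ p.1 p.2) = true then (1 : ℝ) else 0) =
      trueCount (degSeq n k m Φ) σ := by
    rw [sum_boole, ← card_trueSlots, trueSlots]
  have hsign (p : Slot m k) : (if litVal σ (Φ p.1 p.2) = true then (1 : ℝ) else -1) =
      2 * (if litVal σ (Φ p.1 p.2) = true then 1 else 0) - 1 := by
    split_ifs <;> norm_num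
  rw [← Real.exp_sum, ← mul_sum, sum_congr rfl fun p _ => hsign p, sum_sub_distrib, ← mul_sum,
    hcount]
  simp

theorem expect_exp_trueCount_le [NeZero n] (σ : Assignment n) (t : ℝ) :
    𝔼 Φ : Formula n k m, Real.exp (t * (2 * trueCount (degSeq n k m Φ) σ - m * k)) ≤
      Real.exp (m * k * t ^ 2 / 2) :=
  calc _ = Real.cosh t ^ (m * k) := by
        simp only [← prod_slots_exp_sign]
        rw [expect_prod_slots fun l => Real.exp (t * if litVal σ l = true then 1 else -1),
          expect_lit_exp_sign]
    _ ≤ Real.exp (t ^ 2 / 2) ^ (m * k) :=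
        pow_le_pow_left₀ (Real.cosh_pos t).le (Real.cosh_le_exp_half_sq t) _
    _ = Real.exp (m * k * t ^ 2 / 2) := by
        rw [← Real.exp_nat_mul, Nat.cast_mul, mul_div_assoc]

theorem prF_not_four_mul_trueCount_le [NeZero n] (hk : 1 ≤ k) (σ : Assignment n) :
    prF n k m (fun Φ => ¬4 * trueCount (degSeq n k m Φ) σ ≤ (2 * k + 1) * m) ≤
      Real.exp (-(m / (8 * k))) := by
  have hk0 : (0 : ℝ) < k := by exact_mod_cast hk
  set t : ℝ := 1 / (2 * k) with ht
  have hmarkov : Real.exp (t * (m / 2)) *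
      prF n k m (fun Φ => ¬4 * trueCount (degSeq n k m Φ) σ ≤ (2 * k + 1) * m) ≤
        Real.exp (m * k * t ^ 2 / 2) := by
    refine (mul_prF_le_expect (fun Φ => (Real.exp_pos _).le) fun Φ hΦ => ?_).trans
      (expect_exp_trueCount_le σ t)
    have hcount : ((2 * k + 1) * m : ℝ) ≤ 4 * trueCount (degSeq n k m Φ) σ := by
      exact_mod_cast (not_le.mp hΦ).le
    exact Real.exp_le_exp.mpr (mul_le_mul_of_nonneg_left (by linarith) (by positivity))
  rw [mul_comm, ← le_div_iff₀ (Real.exp_pos _), ← Real.exp_sub] at hmarkov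
  refine hmarkov.trans_eq (congrArg Real.exp ?_)
  rw [ht]
  field_simp
  norm_num

theorem prF_not_isBalanced_le [NeZero n] (hk : 1 ≤ k) :
    prF n k m (fun Φ => ¬IsBalanced Φ) ≤ 2 ^ n * Real.exp (-(m / (8 * k))) := by
  simp only [IsBalanced, not_forall]
  refine (prF_exists_le _).trans
    ((sum_le_sum fun σ _ => prF_not_four_mul_trueCount_le hk σ).trans_eq ?_)
  simp

end Balanced

/-- The sign that the literal `l` contributes to the parity of the degree of `x`. -/
def paritySign {n : ℕ} (x : Fin n) (l : Lit n) : ℝ := if l.1 = x then -1 else 1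

/-- The number of variables of even degree minus the number of variables of odd degree. Balanced
variables have even degree, so a large number of them would make this sum large. -/
def paritySum {n k m : ℕ} (Φ : Formula n k m) : ℝ :=
  ∑ x, ∏ p : Slot m k, paritySign x (Φ p.1 p.2)

section Unbalanced

variable {n k m : ℕ}

theorem paritySign_mul_self (x : Fin n) (l : Lit n) : paritySign x l * paritySign x l = 1 := by
  unfold paritySign
  split_ifs <;> norm_num

theorem prod_slots_eq_prod_pow_degSeq (Φ : Formula n k m) (g : Lit n → ℝ) :
    ∏ p : Slot m k, g (Φ p.1 p.2) = ∏ l, g l ^ degSeq n k m Φ l := by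
  rw [← prod_fiberwise univ fun p : Slot m k => Φ p.1 p.2]
  refine prod_congr rfl fun l _ => ?_
  rw [prod_congr rfl fun p hp => by rw [(mem_filter.mp hp).2], prod_const]
  rfl

theorem prod_slots_paritySign (Φ : Formula n k m) (x : Fin n) :
    ∏ p : Slot m k, paritySign x (Φ p.1 p.2) =
      (-1) ^ (degSeq n k m Φ (x, true) + degSeq n k m Φ (x, false)) := by
  rw [prod_slots_eq_prod_pow_degSeq, Fintype.prod_prod_type, Fintype.prod_eq_single x]
  · simp only [paritySign, if_true, Fintype.prod_bool, pow_add]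
  · intro y hy
    simp only [paritySign, if_neg hy, one_pow, prod_const_one]

theorem sub_two_mul_card_unbalancedVars_le_paritySum (Φ : Formula n k m) :
    (n : ℝ) - 2 * (unbalancedVars (degSeq n k m Φ)).card ≤ paritySum Φ := by
  have hle (x : Fin n) :
      1 - 2 * (if degSeq n k m Φ (x, true) ≠ degSeq n k m Φ (x, false) then (1 : ℝ) else 0) ≤
        ∏ p : Slot m k, paritySign x (Φ p.1 p.2) := by
    rw [prod_slots_paritySign]
    split_ifs with h
    · rcases neg_one_pow_eq_or ℝ (degSeq n k m Φ (x, true) + degSeq n k m Φ (x, false)) with h | h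
        <;> rw [h] <;> norm_num
    · rw [not_not.mp h, ← two_mul, pow_mul]
      norm_num
  refine le_trans (le_of_eq ?_) (sum_le_sum fun x _ => hle x)
  rw [sum_sub_distrib, ← mul_sum, sum_boole, unbalancedVars]
  simp

theorem expect_lit_var_eq (x : Fin n) : 𝔼 l : Lit n, (if l.1 = x then (1 : ℝ) else 0) = 1 / n := by
  have hsum (y : Fin n) : ∑ _b : Bool, (if y = x then (1 : ℝ) else 0) = if y = x then 2 else 0 := by
    split_ifs <;> simp
  rw [Fintype.expect_eq_sum_div_card, Fintype.sum_prod_type, sum_congr rfl fun y _ => hsum y]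
  simp [field]

theorem expect_paritySign [NeZero n] (x : Fin n) : 𝔼 l, paritySign x l = 1 - 2 / n := by
  have hsign (l : Lit n) : paritySign x l = 1 - 2 * (if l.1 = x then 1 else 0) := by
    unfold paritySign
    split_ifs <;> norm_num
  simp only [hsign]
  rw [expect_sub_distrib, ← mul_expect, expect_lit_var_eq, Fintype.expect_one]
  ring

theorem expect_paritySign_mul [NeZero n] {x y : Fin n} (hxy : x ≠ y) :
    𝔼 l, paritySign x l * paritySign y l = 1 - 4 / n := by
  have hsign (l : Lit n) : paritySign x l * paritySign y l =
      1 - 2 * ((if l.1 = x then 1 else 0) + (if l.1 = y then 1 else 0)) := by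
    unfold paritySign
    split_ifs with hx hy
    · exact absurd (hx.symm.trans hy) hxy
    all_goals norm_num
  simp only [hsign]
  rw [expect_sub_distrib, ← mul_expect, expect_add_distrib, expect_lit_var_eq, expect_lit_var_eq,
    Fintype.expect_one]
  ring

theorem expect_paritySum [NeZero n] :
    𝔼 Φ : Formula n k m, paritySum Φ = n * (1 - 2 / n) ^ (m * k) := by
  simp only [paritySum]
  rw [expect_sum_comm]
  simp only [expect_prod_slots, expect_paritySign, sum_const, card_univ, Fintype.card_fin,
    nsmul_eq_mul]

theorem expect_sq_paritySum_le (hn : 4 ≤ n) :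
    𝔼 Φ : Formula n k m, paritySum Φ ^ 2 ≤ n + n ^ 2 * (1 - 4 / n) ^ (m * k) := by
  have : NeZero n := ⟨by omega⟩
  have hbase : (0 : ℝ) ≤ 1 - 4 / n :=
    sub_nonneg.mpr (div_le_one_of_le₀ (by exact_mod_cast hn) (Nat.cast_nonneg n))
  have hpair (x y : Fin n) : (𝔼 l, paritySign x l * paritySign y l) ^ (m * k) ≤
      (if x = y then 1 else 0) + (1 - 4 / n : ℝ) ^ (m * k) := by
    split_ifs with h
    · simpa only [h, paritySign_mul_self, Fintype.expect_one, one_pow] using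
        le_add_of_nonneg_right (pow_nonneg hbase _)
    · rw [expect_paritySign_mul h, zero_add]
  calc 𝔼 Φ : Formula n k m, paritySum Φ ^ 2
      = ∑ x : Fin n, ∑ y, (𝔼 l, paritySign x l * paritySign y l) ^ (m * k) := by
        simp only [paritySum, sq, sum_mul_sum, ← prod_mul_distrib, expect_sum_comm]
        refine sum_congr rfl fun x _ => sum_congr rfl fun y _ => ?_
        exact expect_prod_slots fun l => paritySign x l * paritySign y l
    _ ≤ ∑ x : Fin n, ∑ y, ((if x = y then 1 else 0) + (1 - 4 / n : ℝ) ^ (m * k)) :=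
        sum_le_sum fun x _ => sum_le_sum fun y _ => hpair x y
    _ = n + n ^ 2 * (1 - 4 / n) ^ (m * k) := by
        simp only [sum_add_distrib, sum_ite_eq, mem_univ, if_true, sum_const, card_univ,
          Fintype.card_fin, nsmul_eq_mul, mul_one]
        ring

theorem expect_sq_paritySum_sub_le (hn : 4 ≤ n) :
    𝔼 Φ : Formula n k m, (paritySum Φ - n * (1 - 2 / n : ℝ) ^ (m * k)) ^ 2 ≤ n := by
  have : NeZero n := ⟨by omega⟩
  have hn' : (4 : ℝ) ≤ n := by exact_mod_cast hn
  set q : ℝ := (1 - 2 / n) ^ (m * k) with hq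
  have hqsq : (1 - 4 / n : ℝ) ^ (m * k) ≤ q ^ 2 := by
    rw [hq, ← pow_mul, mul_comm (m * k) 2, pow_mul _ 2]
    refine pow_le_pow_left₀ (sub_nonneg.mpr (div_le_one_of_le₀ hn' (Nat.cast_nonneg n))) ?_ _
    calc (1 - 4 / n : ℝ) ≤ 1 - 4 / n + (2 / n) ^ 2 := le_add_of_nonneg_right (sq_nonneg _)
      _ = (1 - 2 / n) ^ 2 := by ring
  have hexpand (Φ : Formula n k m) : (paritySum Φ - n * q) ^ 2 =
      paritySum Φ ^ 2 - 2 * (n * q) * paritySum Φ + (n * q) ^ 2 := by ring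
  simp only [hexpand]
  rw [expect_add_distrib, expect_sub_distrib, ← mul_expect, expect_paritySum,
    Fintype.expect_const, ← hq]
  nlinarith [expect_sq_paritySum_le (k := k) (m := m) hn,
    mul_le_mul_of_nonneg_left hqsq (sq_nonneg (n : ℝ))]

theorem one_sub_two_div_pow_le {N : ℕ} (hn : 2 ≤ n) (hN : n ≤ N) :
    (1 - 2 / n : ℝ) ^ N ≤ 1 / 4 := by
  have hn' : (2 : ℝ) ≤ n := by exact_mod_cast hn
  have hexp : Real.exp (-2) ≤ 1 / 4 := by
    rw [Real.exp_neg, one_div]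
    refine inv_anti₀ (by norm_num) ?_
    rw [show (2 : ℝ) = 1 + 1 by norm_num, Real.exp_add]
    nlinarith [Real.add_one_le_exp (1 : ℝ)]
  calc (1 - 2 / n : ℝ) ^ N ≤ (1 - 2 / n) ^ n :=
        pow_le_pow_of_le_one (sub_nonneg.mpr (div_le_one_of_le₀ hn' (Nat.cast_nonneg n)))
          (sub_le_self 1 (by positivity)) hN
    _ ≤ Real.exp (-2) := Real.one_sub_div_pow_le_exp_neg hn'
    _ ≤ 1 / 4 := hexp

theorem prF_not_le_card_unbalancedVars_le (hn : 4 ≤ n) (hnk : n ≤ m * k) :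
    prF n k m (fun Φ => ¬n ≤ 8 * (unbalancedVars (degSeq n k m Φ)).card) ≤ 4 / n := by
  have hn' : (4 : ℝ) ≤ n := by exact_mod_cast hn
  have hq := one_sub_two_div_pow_le (by omega) hnk
  have hchebyshev : (n / 2 : ℝ) ^ 2 *
      prF n k m (fun Φ => ¬n ≤ 8 * (unbalancedVars (degSeq n k m Φ)).card) ≤ n := by
    refine (mul_prF_le_expect (fun Φ => sq_nonneg _) fun Φ hΦ => ?_).trans
      (expect_sq_paritySum_sub_le hn)
    have hcard : 8 * ((unbalancedVars (degSeq n k m Φ)).card : ℝ) ≤ n := by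
      exact_mod_cast (not_le.mp hΦ).le
    refine pow_le_pow_left₀ (by positivity) ?_ 2
    nlinarith [sub_two_mul_card_unbalancedVars_le_paritySum Φ]
  rw [le_div_iff₀ (by linarith)]
  nlinarith

end Unbalanced

theorem one_sub_le_prF_of_isBalanced {n k m : ℕ} (hn : 4 ≤ n) (hk : 1 ≤ k) (hnk : n ≤ m * k)
    {E : Formula n k m → Prop}
    (hE : ∀ Φ, IsBalanced Φ → n ≤ 8 * (unbalancedVars (degSeq n k m Φ)).card → E Φ) :
    1 - (2 ^ n * Real.exp (-(m / (8 * k))) + 4 / n) ≤ prF n k m E := by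
  have : NeZero n := ⟨by omega⟩
  linarith [one_le_prF_add_prF_not_add_prF_not hE, prF_not_isBalanced_le (n := n) (m := m) hk,
    prF_not_le_card_unbalancedVars_le hn hnk]

/-! ### The linear regime -/

/-- The coefficient of `n` in a lower bound for `driftRate` at clause density `r`. -/
def driftCoeff (k : ℕ) (r : ℝ) : ℝ :=
  critFreq k * (r / 2) / k * (critFreq k / k / 2 * (1 / 8) / (r * k)) ^ 2

theorem driftCoeff_pos {k : ℕ} (hk : 1 ≤ k) {r : ℝ} (hr : 0 < r) : 0 < driftCoeff k r := by
  have hk' : (0 : ℝ) < k := by exact_mod_cast hk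
  have := critFreq_pos k
  unfold driftCoeff
  positivity

theorem driftCoeff_mul_sub_le_driftRate {n k m : ℕ} {r : ℝ} (hk : 1 ≤ k) (hn : 0 < n) (hm : 0 < m)
    (hr : 0 < r) (hle : (m : ℝ) ≤ r * n) (hge : r / 2 * n ≤ (m : ℝ) - 1) :
    driftCoeff k r * n - 16 * k ≤ driftRate n k m := by
  have hk' : (0 : ℝ) < k := by exact_mod_cast hk
  have hn' : (0 : ℝ) < n := by exact_mod_cast hn
  have hm' : (0 : ℝ) < m := by exact_mod_cast hm
  have hfreq := critFreq_pos k
  have hscale : driftCoeff k r * n = critFreq k * (r / 2 * n) / k *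
      (critFreq k / k / 2 * (n / 8) / (r * n * k)) ^ 2 := by
    unfold driftCoeff
    field_simp
  rw [hscale]
  refine sub_le_sub_right (mul_le_mul ?_ ?_ (sq_nonneg _) (critFreq_mul_div_nonneg k hm)) _
  · gcongr
  · gcongr

theorem tendsto_two_pow_mul_exp_add {a b : ℝ} (ha : Real.log 2 < a) :
    Tendsto (fun n : ℕ => 1 - (2 ^ n * Real.exp (b - a * n) + 4 / (n : ℝ))) atTop (nhds 1) := by
  have hlt : 2 * Real.exp (-a) < 1 := by
    rw [Real.exp_neg, ← div_eq_mul_inv, div_lt_one (Real.exp_pos a)]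
    exact (Real.log_lt_iff_lt_exp two_pos).mp ha
  have hpow := (tendsto_pow_atTop_nhds_zero_of_lt_one (by positivity) hlt).const_mul (Real.exp b)
  have hlim := (hpow.add (tendsto_const_div_atTop_nhds_zero_nat 4)).const_sub 1
  simp only [mul_zero, add_zero, sub_zero] at hlim
  refine hlim.congr fun n => ?_
  rw [sub_eq_add_neg b, Real.exp_add, mul_pow, ← Real.exp_nat_mul]
  ring_nf

theorem le_prF_exp_mul_sq_condE_le {n k m : ℕ} {r : ℝ} (hk : 2 ≤ k) (hn : 4 ≤ n) (hr : 2 ≤ r)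
    (hle : (m : ℝ) ≤ r * n) (hlt : r * n ≤ m + 1) (hlarge : 32 * k ≤ driftCoeff k r * n) :
    1 - (2 ^ n * Real.exp (1 / (8 * k) - r / (8 * k) * n) + 4 / n) ≤ prF n k m fun Φ =>
      Real.exp (driftCoeff k r ^ 2 / (512 * k ^ 3 * r) * n) *
          condE n k m (degSeq n k m Φ) (fun Ψ => (satCount n k m Ψ : ℝ)) ^ 2 ≤
        condE n k m (degSeq n k m Φ) (fun Ψ => (satCount n k m Ψ : ℝ) ^ 2) := by
  have hk' : (2 : ℝ) ≤ k := by exact_mod_cast hk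
  have hn' : (4 : ℝ) ≤ n := by exact_mod_cast hn
  have hge : r / 2 * n ≤ (m : ℝ) - 1 := by nlinarith
  have hm : 4 ≤ m := by
    have : (4 : ℝ) ≤ m := by nlinarith
    exact_mod_cast this
  have hm' : (0 : ℝ) < m := by exact_mod_cast (by omega : 0 < m)
  have hnm : n ≤ m := by
    have : (n : ℝ) ≤ m := by nlinarith
    exact_mod_cast this
  set δ := driftCoeff k r
  have hδ0 : 0 < δ := driftCoeff_pos (by omega) (by linarith)
  have hdrift : δ / 2 * n ≤ driftRate n k m := by
    have := driftCoeff_mul_sub_le_driftRate (k := k) (by omega) (by omega) (by omega)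
      (by linarith) hle hge
    linarith
  have hexponent : δ ^ 2 / (512 * k ^ 3 * r) * n ≤ (δ / 2 * n) ^ 2 / (128 * k ^ 3 * m) := by
    rw [show δ ^ 2 / (512 * k ^ 3 * r) * n = (δ / 2 * n) ^ 2 / (128 * k ^ 3 * (r * n)) by
      field_simp; norm_num]
    gcongr
  have htail : Real.exp (-(m / (8 * k))) ≤ Real.exp (1 / (8 * k) - r / (8 * k) * n) := by
    rw [Real.exp_le_exp, div_mul_eq_mul_div, ← sub_div, ← neg_div]
    gcongr
    linarith
  refine le_trans ?_ (one_sub_le_prF_of_isBalanced hn (by omega)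
    (hnm.trans (Nat.le_mul_of_pos_right m (by omega))) fun Φ hbal hunbal => ?_)
  · gcongr
  · exact (mul_le_mul_of_nonneg_right (Real.exp_le_exp.mpr hexponent) (sq_nonneg _)).trans
      (hbal.exp_mul_sq_condE_le hk (by omega) (by nlinarith) hunbal (by positivity) hdrift)

theorem statement3_general {k : ℕ} (hk : 2 ≤ k) {r : ℝ} (hr : 8 * k * Real.log 2 < r) :
    ∃ c : ℝ, 0 < c ∧
      Tendsto
        (fun n : ℕ =>
          let m := ⌊r * (n : ℝ)⌋₊
          prF n k m fun Φ =>
            Real.exp (c * n) *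
                (condE n k m (degSeq n k m Φ) (fun Ψ => (satCount n k m Ψ : ℝ))) ^ 2 ≤
              condE n k m (degSeq n k m Φ) (fun Ψ => (satCount n k m Ψ : ℝ) ^ 2))
        atTop (nhds 1) := by
  have hk' : (2 : ℝ) ≤ k := by exact_mod_cast hk
  have hr2 : 2 ≤ r := by nlinarith [Real.log_two_gt_d9]
  have hδ : 0 < driftCoeff k r := driftCoeff_pos (by omega) (by linarith)
  refine ⟨driftCoeff k r ^ 2 / (512 * k ^ 3 * r), by positivity, ?_⟩
  have hlog : Real.log 2 < r / (8 * k) := by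
    rw [lt_div_iff₀ (by positivity)]
    linarith
  refine tendsto_of_tendsto_of_tendsto_of_le_of_le'
    (tendsto_two_pow_mul_exp_add (b := 1 / (8 * k)) hlog) tendsto_const_nhds ?_
    (Eventually.of_forall fun n => prF_le_one _)
  filter_upwards [eventually_ge_atTop 4,
    (tendsto_natCast_atTop_atTop.const_mul_atTop hδ).eventually_ge_atTop (32 * (k : ℝ))]
    with n hn hlarge
  exact le_prF_exp_mul_sq_condE_le hk hn hr2 (Nat.floor_le (by positivity))
    (Nat.lt_floor_add_one _).le hlarge

theorem eight_mul_sq_le_two_pow {k : ℕ} (hk : 10 ≤ k) : 8 * k ^ 2 ≤ 2 ^ k := by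
  induction k, hk using Nat.le_induction with
  | base => norm_num
  | succ k hk ih =>
    rw [pow_succ 2 k]
    nlinarith

theorem eight_mul_log_two_lt {k : ℕ} (hk : 10 ≤ k) {r : ℝ} (hr : (2 : ℝ) ^ k / k < r) :
    8 * k * Real.log 2 < r := by
  have hk0 : (0 : ℝ) < k := by exact_mod_cast (by omega : 0 < k)
  have hpow : (8 * k ^ 2 : ℝ) ≤ 2 ^ k := by exact_mod_cast eight_mul_sq_le_two_pow hk
  calc 8 * k * Real.log 2 ≤ 8 * k * 1 := by
        gcongr
        linarith [Real.log_two_lt_d9]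
    _ ≤ 2 ^ k / k := by
        rw [le_div_iff₀ hk0]
        linarith
    _ < r := hr

/-- For `k ≥ k0` and `2^k/k < r ≤ 2^k ln 2` there is `c = c(k,r) > 0` such
that whp the degree sequence `d` of the random formula satisfies
`E[|S(Φ_d)|²] ≥ exp(c n) (E[|S(Φ_d)|])²`. -/
theorem statement3 :
    ∃ k0 : ℕ, ∀ k : ℕ, k0 ≤ k →
      ∀ r : ℝ, (2 : ℝ) ^ k / k < r → r ≤ 2 ^ k * Real.log 2 →
        ∃ c : ℝ, 0 < c ∧
          Tendsto
            (fun n : ℕ =>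
              let m := ⌊r * (n : ℝ)⌋₊
              prF n k m fun Φ =>
                Real.exp (c * n) *
                    (condE n k m (degSeq n k m Φ) (fun Ψ => (satCount n k m Ψ : ℝ))) ^ 2 ≤
                  condE n k m (degSeq n k m Φ) (fun Ψ => (satCount n k m Ψ : ℝ) ^ 2))
            atTop (nhds 1) := by
  refine ⟨10, fun k hk r hr _ => ?_⟩
  exact statement3_general (by omega) (eight_mul_log_two_lt hk hr)
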